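/- arXiv:1904.10382 — 3 statements merged into one kernel-verified Lean document; each statement's English description precedes it below -/
import Mathlib

section
/- Fix a prime p. Let (R,m,k) ⊆ (S,n,l) be a finite extension of F-finite noetherian local domains of characteristic p with n ∩ R = m, residue fields k = R/m and l = S/n, and fraction fields K ⊆ L. Let T : S → R be an R-linear map such that σ is injective and a generic isomorphism, T is surjective, and T(n) ⊆ m. Let C be a Cartier subalgebra of C_R such that every φ ∈ C_e has a chosen T-transpose φ^⊤, and assume a_e(R,C) ≠ 0 for some e ≥ 1; set n₀ := gcd{ e ≥ 1 : a_e(R,C) ≠ 0 }, d := dim R (Krull dimension; note dim S = d), r_k := [k^{1/p} : k] and r_l := [l^{1/p} : l] (the dimension of the residue field as a module over itself via Frobenius). If the sequence e ↦ a_{n₀e}(R,C)/(p^{n₀e·d}·r_k^{n₀e}) converges to a real number s(R,C) and the sequence e ↦ a_{n₀e}(S,f*C)/(p^{n₀e·d}·r_l^{n₀e}) converges to a real number s(S,f*C), then [l : k]·s(S,f*C) = [L : K]·s(R,C). -/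
/-- `p^e`-semilinear additive maps ("Cartier maps"):
`φ (a^{p^e} • x) = a • φ x`. -/
def IsCartierMap (p : ℕ) (A : Type*) [CommSemiring A] {X Y : Type*} [AddCommMonoid X]
    [AddCommMonoid Y] [Module A X] [Module A Y] (e : ℕ) (φ : X →+ Y) : Prop :=
  ∀ (a : A) (x : X), φ (a ^ p ^ e • x) = a • φ x

/-- A Cartier structure (Cartier subalgebra of `C_X`) on an `A`-module `X`. -/
structure CartierStructure (p : ℕ) (A : Type*) [CommRing A] (X : Type*) [AddCommGroup X]
    [Module A X] where
  carrier : ℕ → Set (X →+ X)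
  cartier_mem : ∀ e, 1 ≤ e → ∀ φ ∈ carrier e, IsCartierMap p A e φ
  add_mem : ∀ e, 1 ≤ e → ∀ φ ∈ carrier e, ∀ ψ ∈ carrier e, φ + ψ ∈ carrier e
  smul_mem : ∀ e, 1 ≤ e → ∀ (a : A), ∀ φ ∈ carrier e,
    (DistribMulAction.toAddMonoidHom X a).comp φ ∈ carrier e
  mul_mem : ∀ e, 1 ≤ e → ∀ (a : A), ∀ φ ∈ carrier e,
    φ.comp (DistribMulAction.toAddMonoidHom X a) ∈ carrier e
  comp_mem : ∀ e d, 1 ≤ e → 1 ≤ d → ∀ φ ∈ carrier e, ∀ ψ ∈ carrier d,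
    φ.comp ψ ∈ carrier (e + d)

/-- The `S`-linear map `σ : S → Hom_R(S,R)`, `σ(s)(x) = T(s·x)`, as an `R`-bilinear map. -/
noncomputable def sigmaT (R S : Type*) [CommRing R] [CommRing S] [Algebra R S]
    (T : S →ₗ[R] R) : S →ₗ[R] (S →ₗ[R] R) :=
  LinearMap.mk₂ R (fun s x => T (s * x))
    (fun s s' x => by show T ((s + s') * x) = T (s * x) + T (s' * x); rw [add_mul, map_add])
    (fun r s x => by show T ((r • s) * x) = r • T (s * x); rw [smul_mul_assoc, map_smul])
    (fun s x x' => by show T (s * (x + x')) = T (s * x) + T (s * x'); rw [mul_add, map_add])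
    (fun r s x => by show T (s * (r • x)) = r • T (s * x); rw [mul_smul_comm, map_smul])

/-- `ψ` is a `T`-transpose of `φ`: `T (ψ s * s') = φ (T (s * s'^{p^e}))`. -/
def IsTranspose (p : ℕ) {R S : Type*} [CommRing R] [CommRing S] [Algebra R S]
    (T : S →ₗ[R] R) (e : ℕ) (φ : R →+ R) (ψ : S →+ S) : Prop :=
  ∀ s s' : S, T (ψ s * s') = φ (T (s * s' ^ p ^ e))

/-- The degree-`e` part of the pulled back Cartier algebra `f^*C`:
finite sums `Σ φᵢ^⊤ · sᵢ` where `(χ · s) x = χ (s * x)`. -/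
def pushFam {R S : Type*} [CommRing R] [CommRing S] (D : ℕ → Set (R →+ R))
    (tr : ℕ → (R →+ R) → (S →+ S)) : ℕ → Set (S →+ S) := fun e =>
  { ψ | ∃ (k : ℕ) (φ : Fin k → R →+ R) (s : Fin k → S), (∀ i, φ i ∈ D e) ∧
      ψ = ∑ i, (tr e (φ i)).comp (AddMonoidHom.mulLeft (s i)) }

/-- The length of a module, as the Krull dimension of its submodule lattice. -/
noncomputable def moduleLength (A : Type*) [Ring A] (M : Type*) [AddCommGroup M]
    [Module A M] : WithBot ℕ∞ :=
  Order.krullDim (Submodule A M)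

/-- The splitting number `a_e`: the length (as a left `A`-module) of `D/D^{ns}` where
`D^{ns} = {ϑ ∈ D | ϑ(X) ⊆ m}`, realized as the image of the span of `D` in the quotient by
the span of `D^{ns}`. -/
noncomputable def splitNum (A : Type*) [CommRing A] [IsLocalRing A]
    {X : Type*} [AddCommMonoid X] (D : Set (X →+ A)) : WithBot ℕ∞ :=
  moduleLength A
    ↥(Submodule.map
        (Submodule.span A { ϑ ∈ D | ∀ x, ϑ x ∈ IsLocalRing.maximalIdeal A }).mkQ
        (Submodule.span A D))

/-- Type synonym for a ring viewed as a module over itself via Frobenius. -/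
def FrobMod (A : Type*) := A

instance {A : Type*} [AddCommGroup A] : AddCommGroup (FrobMod A) := ‹AddCommGroup A›

/-- The module structure of `A` on `FrobMod A = A` via the Frobenius `a ↦ a^p`;
`A` is `F`-finite iff `FrobMod A` is a finite module, and `[A^{1/p} : A]` is its rank. -/
noncomputable def frobModule (p : ℕ) (hp : p.Prime) (A : Type*) [CommRing A] [CharP A p] :
    Module A (FrobMod A) :=
  haveI : ExpChar A p := .prime hp
  Module.compHom A (frobenius A p)


open Module in
lemma fs_length_gen {R M : Type*} [CommRing R] [AddCommGroup M] [Module R M] (Q : Ideal R)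
    {μ : ℕ} (g : Fin μ → M) (hg : Submodule.span R (Set.range g) = ⊤)
    (hQ : ∀ a ∈ Q, ∀ x : M, a • x = 0) :
    Module.length R M ≤ μ * Module.length R (R ⧸ Q) := by
  let f : (Fin μ → R ⧸ Q) →ₗ[R] M := LinearMap.lsum R (fun _ => R ⧸ Q) ℕ
    (fun i => Submodule.liftQ Q (LinearMap.toSpanSingleton R M (g i))
      (fun a ha => by simp [hQ a ha]))
  have hf : Function.Surjective f := by
    rw [← LinearMap.range_eq_top, eq_top_iff, ← hg, Submodule.span_le]
    rintro _ ⟨i, rfl⟩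
    refine ⟨Pi.single i (Submodule.Quotient.mk 1), ?_⟩
    simp only [f, LinearMap.lsum_piSingle]
    erw [Submodule.liftQ_apply]
    simp
  have := Module.length_le_of_surjective f hf
  rwa [Module.length_pi, ENat.card_eq_coe_fintype_card, Fintype.card_fin] at this

lemma fs_length_mono {R : Type*} [CommRing R] {I J : Ideal R} (h : I ≤ J) :
    Module.length R (R ⧸ J) ≤ Module.length R (R ⧸ I) :=
  Module.length_le_of_surjective (Submodule.factor h) (Submodule.factor_surjective h)

lemma fs_length_pow {R : Type*} [CommRing R] (Q : Ideal R) (x : R) (q : ℕ) :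
    Module.length R (R ⧸ (Q ⊔ Ideal.span {x ^ q})) ≤
      q * Module.length R (R ⧸ (Q ⊔ Ideal.span {x})) := by
  induction q with
  | zero =>
    have : Subsingleton (R ⧸ (Q ⊔ Ideal.span {x ^ 0})) := by
      rw [Submodule.Quotient.subsingleton_iff]; simp
    simp [Module.length_eq_zero]
  | succ q ih =>
    let A := Q ⊔ Ideal.span {x ^ (q+1)}
    let B := Q ⊔ Ideal.span {x ^ q}
    have hAB : A ≤ B := sup_le_sup_left (Ideal.span_singleton_le_span_singleton.mpr
      (pow_dvd_pow _ (Nat.le_succ q))) _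
    let π : (R ⧸ A) →ₗ[R] (R ⧸ B) := Submodule.factor hAB
    have h1 := Module.length_eq_add_of_exact (LinearMap.ker π).subtype π
      (Submodule.subtype_injective _) (Submodule.factor_surjective hAB)
      (LinearMap.exact_subtype_ker_map π)
    have hk : Module.length R (LinearMap.ker π) ≤
        (1 : ℕ) * Module.length R (R ⧸ (Q ⊔ Ideal.span {x})) := by
      refine fs_length_gen (μ := 1) _ (fun _ => ⟨Submodule.Quotient.mk (x ^ q), ?_⟩) ?_ ?_
      · simp only [LinearMap.mem_ker, π]
        erw [Submodule.factor_mk]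
        refine (Submodule.Quotient.mk_eq_zero _).mpr ?_
        exact Ideal.mem_sup_right (Ideal.mem_span_singleton_self _)
      · rw [eq_top_iff]
        rintro ⟨y, hy⟩ -
        obtain ⟨y, rfl⟩ := Submodule.Quotient.mk_surjective _ y
        have hy' : y ∈ B := by
          simp only [LinearMap.mem_ker, π] at hy
          erw [Submodule.factor_mk] at hy
          exact (Submodule.Quotient.mk_eq_zero _).mp hy
        obtain ⟨a, ha, b, hb, rfl⟩ := Submodule.mem_sup.mp hy'
        obtain ⟨c, rfl⟩ := Ideal.mem_span_singleton'.mp hb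
        simp only [Set.range_const]
        rw [Submodule.mem_span_singleton]
        refine ⟨c, Subtype.ext ?_⟩
        show c • Submodule.Quotient.mk (x ^ q) = _
        rw [← Submodule.Quotient.mk_smul, Submodule.Quotient.eq]
        have : c • x ^ q - (a + c * x ^ q) = -a := by simp
        rw [this]
        exact neg_mem (Ideal.mem_sup_left ha)
      · rintro a ha ⟨y, hy⟩
        obtain ⟨y, rfl⟩ := Submodule.Quotient.mk_surjective _ y
        have hy' : y ∈ B := by
          simp only [LinearMap.mem_ker, π] at hy
          erw [Submodule.factor_mk] at hy
          exact (Submodule.Quotient.mk_eq_zero _).mp hy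
        refine Subtype.ext ?_
        show a • Submodule.Quotient.mk y = _
        rw [← Submodule.Quotient.mk_smul]
        show _ = 0
        rw [Submodule.Quotient.mk_eq_zero]
        obtain ⟨u, hu, v, hv, rfl⟩ := Submodule.mem_sup.mp ha
        obtain ⟨c, rfl⟩ := Ideal.mem_span_singleton'.mp hv
        obtain ⟨u', hu', v', hv', rfl⟩ := Submodule.mem_sup.mp hy'
        obtain ⟨c', rfl⟩ := Ideal.mem_span_singleton'.mp hv'
        have : (u + c * x) • (u' + c' * x ^ q) =
          (u * (u' + c' * x ^ q) + c * x * u') + (c * c') * x ^ (q+1) := by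
          simp only [smul_eq_mul]; ring
        rw [this]
        exact add_mem (Ideal.mem_sup_left (add_mem (Ideal.mul_mem_right _ _ hu)
          (Ideal.mul_mem_left _ _ hu')))
          (Ideal.mem_sup_right (Ideal.mul_mem_left _ _ (Ideal.mem_span_singleton_self _)))
    show Module.length R (R ⧸ A) ≤ _
    rw [h1]
    push_cast at hk ⊢
    rw [add_mul, add_comm]
    exact add_le_add ih hk

lemma fs_length_pow_finset {R : Type*} [CommRing R] (q : ℕ) (s : Finset R) : ∀ (Q : Ideal R),
    Module.length R (R ⧸ (Q ⊔ Ideal.span ((fun x => x ^ q) '' (s : Set R)))) ≤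
      (q : ℕ∞) ^ s.card * Module.length R (R ⧸ (Q ⊔ Ideal.span (s : Set R))) := by
  classical
  induction s using Finset.induction_on with
  | empty => intro Q; rw [Finset.coe_empty, Set.image_empty]; simp
  | insert a s ha ih =>
    intro Q
    rw [Finset.card_insert_of_notMem ha]
    rw [Finset.coe_insert, Set.image_insert_eq, Ideal.span_insert, Ideal.span_insert, ← sup_assoc]
    refine (ih _).trans ?_
    rw [pow_succ, mul_assoc, sup_assoc, sup_comm (Ideal.span {a ^ q}), ← sup_assoc]
    gcongr
    refine (fs_length_pow _ _ _).trans (le_of_eq ?_)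
    rw [sup_assoc, sup_comm (Ideal.span (s : Set R))]

lemma fs_bound {R : Type*} [CommRing R] [IsDomain R] [IsNoetherianRing R] [IsLocalRing R]
    (d : ℕ) (hd : ringKrullDim R = d) (c : R) (hc : c ≠ 0) :
    ∃ N : ℕ, ∀ q : ℕ, 1 ≤ q → ∀ I : Ideal R, (∀ x ∈ IsLocalRing.maximalIdeal R, x ^ q ∈ I) →
      Module.length R (R ⧸ (I ⊔ Ideal.span {c})) * q ≤ N * (q : ℕ∞) ^ d := by
  by_cases hu : IsUnit c
  · refine ⟨0, fun q _ I _ => ?_⟩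
    have : Subsingleton (R ⧸ (I ⊔ Ideal.span {c})) := by
      rw [Submodule.Quotient.subsingleton_iff, Ideal.span_singleton_eq_top.mpr hu]; simp
    simp [Module.length_eq_zero]
  have hcm : c ∈ IsLocalRing.maximalIdeal R := hu
  let B := R ⧸ Ideal.span {c}
  have hne : Ideal.span {c} ≠ ⊤ := by rwa [Ne, Ideal.span_singleton_eq_top]
  have : Nontrivial B := Ideal.Quotient.nontrivial_iff.mpr hne
  have : IsLocalRing B := IsLocalRing.of_surjective' (Ideal.Quotient.mk _)
    Ideal.Quotient.mk_surjective
  obtain ⟨s, hs1, hs2⟩ := Ideal.exists_finset_card_eq_height_of_isNoetherianRing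
    (IsLocalRing.maximalIdeal B)
  have hcard : s.card + 1 ≤ d := by
    have h1 := ringKrullDim_quotient_succ_le_of_nonZeroDivisor (mem_nonZeroDivisors_of_ne_zero hc)
    rw [hd] at h1
    have h2 := IsLocalRing.maximalIdeal_height_eq_ringKrullDim (R := B)
    rw [← hs2] at h2
    rw [← h2] at h1
    exact_mod_cast h1
  have := IsLocalRing.quotient_artinian_of_mem_minimalPrimes_of_isLocalRing _ hs1
  have hfin : Module.length B (B ⧸ Ideal.span (s : Set B)) ≠ ⊤ := by
    have : IsArtinian B (B ⧸ Ideal.span (s : Set B)) :=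
      isArtinian_of_surjective_algebraMap (R := B ⧸ Ideal.span (s : Set B)) Ideal.Quotient.mk_surjective
    exact Module.length_ne_top
  obtain ⟨N, hN⟩ := ENat.ne_top_iff_exists.mp hfin
  refine ⟨N, fun q hq I hI => ?_⟩
  have h1 := fs_length_pow_finset q s ⊥
  rw [bot_sup_eq, bot_sup_eq, ← hN] at h1
  have h2 : Module.length R (R ⧸ (I ⊔ Ideal.span {c})) ≤
      Module.length B (B ⧸ (Ideal.span ((fun x => x ^ q) '' (s : Set B)))) := by
    rw [← Module.length_eq_of_surjective (S := R) (R := B) Ideal.Quotient.mk_surjective]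
    let J := (Ideal.span ((fun x => x ^ q) '' (s : Set B)))
    let g : R →ₗ[R] (B ⧸ J) := (J.mkQ.restrictScalars R).comp (Ideal.span {c}).mkQ
    have hg : Function.Surjective g := J.mkQ_surjective.comp (Submodule.mkQ_surjective _)
    rw [← (LinearMap.quotKerEquivOfSurjective g hg).length_eq]
    apply fs_length_mono
    intro x hx
    have hx' : (Ideal.Quotient.mk (Ideal.span {c}) x) ∈ J := by
      rw [LinearMap.mem_ker] at hx
      exact (Submodule.Quotient.mk_eq_zero _).mp hx
    have hJ : J ≤ I.map (Ideal.Quotient.mk (Ideal.span {c})) := by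
      rw [Ideal.span_le]
      rintro _ ⟨y, hy, rfl⟩
      have hym : y ∈ IsLocalRing.maximalIdeal B := hs1.1.2 (Ideal.subset_span hy)
      obtain ⟨y, rfl⟩ := Ideal.Quotient.mk_surjective y
      have hy' : y ∈ IsLocalRing.maximalIdeal R := by
        rw [IsLocalRing.mem_maximalIdeal, mem_nonunits_iff] at hym ⊢
        exact fun h => hym (h.map _)
      show _ ∈ I.map (Ideal.Quotient.mk (Ideal.span {c}))
      simp only [← map_pow]
      exact Ideal.mem_map_of_mem _ (hI y hy')
    have := hJ hx'
    rw [← Ideal.mem_comap, Ideal.comap_map_of_surjective _ Ideal.Quotient.mk_surjective] at this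
    rwa [← RingHom.ker_eq_comap_bot, Ideal.mk_ker] at this
  calc _ ≤ ((q : ℕ∞) ^ s.card * N) * q := by gcongr; exact h2.trans h1
    _ = N * (q : ℕ∞) ^ (s.card + 1) := by ring
    _ ≤ _ := by
      gcongr
      exact_mod_cast hq

lemma fs_basis {R S : Type*} [CommRing R] [CommRing S] [IsDomain R] [IsDomain S]
    [Algebra R S] [Module.Finite R S] (T : S →ₗ[R] R)
    (hσ : ∀ s : S, (∀ x, T (s * x) = 0) → s = 0) :
    ∃ (c : R) (s t : Fin (Module.finrank R S) → S), c ≠ 0 ∧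
      (∀ x : S, c • x ∈ Submodule.span R (Set.range s)) ∧
      (∀ i j, T (t j * s i) = if i = j then c else 0) := by
  classical
  obtain ⟨s, hs⟩ := exists_linearIndependent_of_le_finrank (R := R) (M := S) le_rfl
  have h1 : ∀ x : S, ∃ r : R, r ≠ 0 ∧ r • x ∈ Submodule.span R (Set.range s) := by
    intro x
    by_contra! hx
    have hli : LinearIndependent R (Fin.cons x s : Fin (Module.finrank R S + 1) → S) := by
      refine LinearIndependent.finCons' x s hs ?_
      intro a y hy hay
      by_contra ha
      refine hx a ha ?_
      rw [eq_neg_of_add_eq_zero_left hay]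
      exact neg_mem hy
    have := hli.fintype_card_le_finrank
    simp at this
  obtain ⟨c1, hc1, hc1s⟩ : ∃ c : R, c ≠ 0 ∧ ∀ x : S, c • x ∈ Submodule.span R (Set.range s) := by
    obtain ⟨G, hG⟩ := Module.Finite.fg_top (R := R) (M := S)
    choose r hr hrs using h1
    refine ⟨∏ g ∈ G, r g, Finset.prod_ne_zero_iff.mpr fun g _ => hr g, fun x => ?_⟩
    have hx : x ∈ Submodule.span R (G : Set S) := hG ▸ Submodule.mem_top
    induction hx using Submodule.span_induction with
    | mem x hx =>
      rw [← Finset.mul_prod_erase G r hx, mul_comm, mul_smul]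
      exact Submodule.smul_mem _ _ (hrs x)
    | zero => simp
    | add x y _ _ hx hy => rw [smul_add]; exact add_mem hx hy
    | smul a x _ hx => rw [smul_comm]; exact Submodule.smul_mem _ _ hx
  let M : Matrix (Fin (Module.finrank R S)) (Fin (Module.finrank R S)) R :=
    fun i j => T (s i * s j)
  have hdet : M.det ≠ 0 := by
    intro h0
    obtain ⟨v, hv, hvM⟩ := Matrix.exists_vecMul_eq_zero_iff.mpr h0
    apply hv
    have hz : ∑ i, v i • s i = 0 := by
      apply hσ
      have hj : ∀ j, T ((∑ i, v i • s i) * s j) = 0 := by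
        intro j
        have := congrFun hvM j
        simp only [Matrix.vecMul, dotProduct, M, Pi.zero_apply] at this
        rw [Finset.sum_mul, map_sum, ← this]
        refine Finset.sum_congr rfl fun i _ => ?_
        rw [smul_mul_assoc, map_smul, smul_eq_mul]
      intro x
      have hspan : ∀ y ∈ Submodule.span R (Set.range s), T ((∑ i, v i • s i) * y) = 0 := by
        intro y hy
        induction hy using Submodule.span_induction with
        | mem y hy => obtain ⟨j, rfl⟩ := hy; exact hj j
        | zero => simp
        | add x y _ _ hx hy => rw [mul_add, map_add, hx, hy, add_zero]
        | smul a x _ hx => rw [mul_smul_comm, map_smul, hx, smul_zero]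
      have := hspan _ (hc1s x)
      rw [mul_smul_comm, map_smul, smul_eq_mul] at this
      exact (mul_eq_zero.mp this).resolve_left hc1
    exact funext (Fintype.linearIndependent_iff.mp hs v hz)
  refine ⟨M.det * c1, s, fun j => c1 • ∑ k, M.adjugate j k • s k, mul_ne_zero hdet hc1,
    fun x => ?_, fun i j => ?_⟩
  · rw [mul_smul]; exact Submodule.smul_mem _ _ (hc1s x)
  · have h := congrFun (congrFun (Matrix.adjugate_mul M) j) i
    rw [smul_mul_assoc, map_smul, Finset.sum_mul, map_sum]
    have : ∑ k, T (M.adjugate j k • s k * s i) = (M.adjugate * M) j i := by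
      rw [Matrix.mul_apply]
      refine Finset.sum_congr rfl fun k _ => ?_
      rw [smul_mul_assoc, map_smul, smul_eq_mul]
    rw [this, h]
    simp only [Matrix.smul_apply, Matrix.one_apply, smul_eq_mul, eq_comm (a := i)]
    split_ifs <;> ring

lemma fs_coker {R M : Type*} [CommRing R] [AddCommGroup M] [Module R M] (I : Ideal R) (c : R)
    {μ : ℕ} (g : Fin μ → M) (hg : Submodule.span R (Set.range g) = ⊤)
    (hI : ∀ a ∈ I, ∀ x : M, a • x = 0) :
    Module.length R (M ⧸ LinearMap.range (LinearMap.lsmul R M c)) ≤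
      μ * Module.length R (R ⧸ (I ⊔ Ideal.span {c})) := by
  refine fs_length_gen _ (fun i => Submodule.Quotient.mk (g i)) ?_ ?_
  · have : (Set.range fun i => (Submodule.Quotient.mk (g i) :
        M ⧸ LinearMap.range (LinearMap.lsmul R M c))) =
        (LinearMap.range (LinearMap.lsmul R M c)).mkQ '' Set.range g := by
      rw [← Set.range_comp]; rfl
    rw [this, Submodule.span_image, hg, Submodule.map_top, Submodule.range_mkQ]
  · intro a ha x
    obtain ⟨x, rfl⟩ := Submodule.Quotient.mk_surjective _ x
    obtain ⟨u, hu, v, hv, rfl⟩ := Submodule.mem_sup.mp ha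
    obtain ⟨b, rfl⟩ := Ideal.mem_span_singleton'.mp hv
    rw [← Submodule.Quotient.mk_smul, Submodule.Quotient.mk_eq_zero]
    refine ⟨b • x, ?_⟩
    rw [add_smul, hI u hu, zero_add, LinearMap.lsmul_apply, mul_comm, mul_smul]

lemma fs_len_range {R M N : Type*} [CommRing R] [AddCommGroup M] [Module R M]
    [AddCommGroup N] [Module R N] (f : M →ₗ[R] N) :
    Module.length R M = Module.length R (LinearMap.ker f) +
      Module.length R (LinearMap.range f) :=
  Module.length_eq_add_of_exact (LinearMap.ker f).subtype f.rangeRestrict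
    (Submodule.subtype_injective _) f.surjective_rangeRestrict
    (by rw [LinearMap.exact_iff]; simp)

lemma fs_len_quot {R M : Type*} [CommRing R] [AddCommGroup M] [Module R M]
    (N : Submodule R M) :
    Module.length R M = Module.length R N + Module.length R (M ⧸ N) :=
  Module.length_eq_add_of_exact N.subtype N.mkQ
    (Submodule.subtype_injective _) N.mkQ_surjective
    (by rw [LinearMap.exact_iff]; simp)

lemma fs_compare {R S : Type*} [CommRing R] [CommRing S] [Algebra R S]
    (T : S →ₗ[R] R) (I : Ideal R) (J : Submodule R S) (hJ : ∀ s, s ∈ J ↔ ∀ x, T (s * x) ∈ I)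
    (hfin : Module.length R (S ⧸ J) ≠ ⊤)
    {n μ : ℕ} (g : Fin μ → S) (hg : Submodule.span R (Set.range g) = ⊤)
    (c : R) (s t : Fin n → S) (hcs : ∀ x : S, c • x ∈ Submodule.span R (Set.range s))
    (hst : ∀ i j, T (t j * s i) = if i = j then c else 0) :
    Module.length R (S ⧸ J) ≤ n * Module.length R (R ⧸ I) +
        μ * Module.length R (R ⧸ (I ⊔ Ideal.span {c})) ∧
      n * Module.length R (R ⧸ I) ≤ Module.length R (S ⧸ J) +
        n * Module.length R (R ⧸ (I ⊔ Ideal.span {c})) := by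
  classical
  let f0 : S →ₗ[R] (Fin n → R ⧸ I) := LinearMap.pi fun i =>
    (Submodule.mkQ I).comp (T.comp (LinearMap.mulRight R (s i)))
  have hf0 : J ≤ LinearMap.ker f0 := by
    intro x hx
    rw [LinearMap.mem_ker]
    funext i
    exact (Submodule.Quotient.mk_eq_zero _).mpr ((hJ x).mp hx (s i))
  let f : (S ⧸ J) →ₗ[R] (Fin n → R ⧸ I) := J.liftQ f0 hf0
  have hpi : Module.length R (Fin n → R ⧸ I) = n * Module.length R (R ⧸ I) := by
    rw [Module.length_pi, ENat.card_eq_coe_fintype_card, Fintype.card_fin]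
  have hkill : ∀ a ∈ I, ∀ x : S ⧸ J, a • x = 0 := by
    intro a ha x
    obtain ⟨x, rfl⟩ := Submodule.Quotient.mk_surjective _ x
    rw [← Submodule.Quotient.mk_smul, Submodule.Quotient.mk_eq_zero, hJ]
    intro y
    rw [smul_mul_assoc, map_smul, smul_eq_mul]
    exact Ideal.mul_mem_right _ _ ha
  constructor
  · have hker : LinearMap.ker f ≤ LinearMap.ker (LinearMap.lsmul R (S ⧸ J) c) := by
      intro x hx
      obtain ⟨x, rfl⟩ := Submodule.Quotient.mk_surjective _ x
      have hx' : ∀ i, T (x * s i) ∈ I := fun i =>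
        (Submodule.Quotient.mk_eq_zero _).mp (congrFun (LinearMap.mem_ker.mp hx) i)
      rw [LinearMap.mem_ker, LinearMap.lsmul_apply, ← Submodule.Quotient.mk_smul,
        Submodule.Quotient.mk_eq_zero, hJ]
      intro y
      have hspan : ∀ y ∈ Submodule.span R (Set.range s), T (x * y) ∈ I := by
        intro y hy
        induction hy using Submodule.span_induction with
        | mem y hy => obtain ⟨j, rfl⟩ := hy; exact hx' j
        | zero => simp
        | add x y _ _ hx hy => rw [mul_add, map_add]; exact add_mem hx hy
        | smul a x _ hx => rw [mul_smul_comm, map_smul]; exact Submodule.smul_mem _ _ hx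
      have := hspan _ (hcs y)
      rwa [mul_smul_comm, ← smul_mul_assoc] at this
    have e1 := fs_len_range (LinearMap.lsmul R (S ⧸ J) c)
    have e2 := fs_len_quot (LinearMap.range (LinearMap.lsmul R (S ⧸ J) c))
    have e3 : Module.length R (LinearMap.ker (LinearMap.lsmul R (S ⧸ J) c)) =
        Module.length R ((S ⧸ J) ⧸ LinearMap.range (LinearMap.lsmul R (S ⧸ J) c)) := by
      have hne : Module.length R (LinearMap.range (LinearMap.lsmul R (S ⧸ J) c)) ≠ ⊤ :=
        ne_top_of_le_ne_top hfin (by rw [e1]; exact le_add_self)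
      rw [e2, add_comm] at e1
      exact ((ENat.add_left_injective_of_ne_top hne) e1).symm
    have e4 := fs_coker (M := S ⧸ J) I c (fun i => Submodule.Quotient.mk (g i)) (by
      have : (Set.range fun i => (Submodule.Quotient.mk (g i) : S ⧸ J)) =
          J.mkQ '' Set.range g := by
        rw [← Set.range_comp]; rfl
      rw [this, Submodule.span_image, hg, Submodule.map_top, Submodule.range_mkQ]) hkill
    rw [fs_len_range f, add_comm]
    refine add_le_add ?_ ?_
    · rw [← hpi]
      exact Module.length_le_of_injective _ (Submodule.subtype_injective _)
    · refine le_trans ?_ (e3.le.trans e4)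
      exact Module.length_le_of_injective (Submodule.inclusion hker)
        (Submodule.inclusion_injective _)
  · have hr : LinearMap.range (LinearMap.lsmul R (Fin n → R ⧸ I) c) ≤ LinearMap.range f := by
      rintro _ ⟨v, rfl⟩
      choose w hw using fun i => Submodule.Quotient.mk_surjective I (v i)
      refine ⟨Submodule.Quotient.mk (∑ j, w j • t j), ?_⟩
      funext i
      show Submodule.Quotient.mk (T ((∑ j, w j • t j) * s i)) = c • v i
      rw [← hw, ← Submodule.Quotient.mk_smul]
      congr 1
      rw [Finset.sum_mul, map_sum]
      simp only [smul_mul_assoc, map_smul, hst]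
      simp [mul_comm]
    have e2 := fs_len_quot (LinearMap.range (LinearMap.lsmul R (Fin n → R ⧸ I) c))
    have e4 := fs_coker (M := Fin n → R ⧸ I) I c
      (fun i => Pi.single i (Submodule.Quotient.mk 1)) (by
        rw [eq_top_iff]
        rintro v -
        choose w hw using fun i => Submodule.Quotient.mk_surjective I (v i)
        have : v = ∑ i, w i • (Pi.single i (Submodule.Quotient.mk 1) : Fin n → R ⧸ I) := by
          funext i
          rw [Finset.sum_apply]
          simp only [Pi.smul_apply, Pi.single_apply, smul_ite, smul_zero]
          rw [Finset.sum_ite_eq Finset.univ i, if_pos (Finset.mem_univ _),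
            ← Submodule.Quotient.mk_smul, smul_eq_mul, mul_one, hw]
        rw [this]
        exact Submodule.sum_mem _ fun i _ => Submodule.smul_mem _ _
          (Submodule.subset_span ⟨i, rfl⟩)) (by
        intro a ha v
        choose w hw using fun i => Submodule.Quotient.mk_surjective I (v i)
        funext i
        rw [Pi.smul_apply, ← hw, ← Submodule.Quotient.mk_smul]
        exact (Submodule.Quotient.mk_eq_zero _).mpr (Ideal.mul_mem_right _ _ ha))
    rw [← hpi, e2]
    refine add_le_add ?_ e4
    refine (Module.length_le_of_injective (Submodule.inclusion hr)
        (Submodule.inclusion_injective _)).trans ?_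
    rw [fs_len_range f]
    exact le_add_self

/-- restriction of scalars along the `e`-th iterate of Frobenius -/
def FE (_p _e : ℕ) (M : Type*) := M

instance FE.instACG (p e : ℕ) (M : Type*) [AddCommGroup M] : AddCommGroup (FE p e M) :=
  inferInstanceAs (AddCommGroup M)

noncomputable instance FE.instMod (p e : ℕ) (A M : Type*) [CommRing A] [ExpChar A p]
    [AddCommGroup M] [Module A M] : Module A (FE p e M) :=
  Module.compHom M (iterateFrobenius A p e)

lemma FE.smul_def (p e : ℕ) {A M : Type*} [CommRing A] [ExpChar A p]
    [AddCommGroup M] [Module A M] (a : A) (x : M) :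
    (a • (show FE p e M from x) : FE p e M) = (show FE p e M from a ^ p ^ e • x) := by
  show (iterateFrobenius A p e a • x) = _
  rw [iterateFrobenius_def]

/-- the ring `A`, as an algebra over itself via Frobenius -/
def FRing (_p : ℕ) (A : Type*) := A

instance (p : ℕ) (A : Type*) [CommRing A] : CommRing (FRing p A) := inferInstanceAs (CommRing A)
instance (p : ℕ) (A : Type*) [CommRing A] [IsLocalRing A] : IsLocalRing (FRing p A) :=
  inferInstanceAs (IsLocalRing A)
noncomputable instance (p : ℕ) (A : Type*) [CommRing A] [ExpChar A p] : Algebra A (FRing p A) :=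
  RingHom.toAlgebra (show A →+* FRing p A from frobenius A p)

lemma fs_len_frob (p : ℕ) (hp : p.Prime) (A : Type*) [CommRing A] [IsLocalRing A] [ExpChar A p]
    [ExpChar (IsLocalRing.ResidueField A) p] (r : ℕ∞)
    (hr : @Module.length (IsLocalRing.ResidueField A) (IsLocalRing.ResidueField A) _ _
      (Module.compHom _ (frobenius (IsLocalRing.ResidueField A) p)) = r)
    (M : Type*) [AddCommGroup M] [inst : Module A M] :
    @Module.length A M _ _ (Module.compHom M (frobenius A p)) = Module.length A M * r := by
  let m1 : Module A M := Module.compHom M (frobenius A p)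
  let m2 : Module (FRing p A) M := inst
  have : IsScalarTower A (FRing p A) M := IsScalarTower.of_algebraMap_smul fun a x => rfl
  have : IsLocalHom (algebraMap A (FRing p A)) := ⟨fun a ha => by
    have : IsUnit (a ^ p) := ha
    exact (isUnit_pow_iff hp.ne_zero).mp this⟩
  have key := IsLocalRing.length_restrictScalars A (FRing p A) M
  have h2 : Module.length (IsLocalRing.ResidueField A) (IsLocalRing.ResidueField (FRing p A)) = r := by
    rw [← hr]
    let m3 : Module (IsLocalRing.ResidueField A) (IsLocalRing.ResidueField A) :=
      (Module.compHom _ (frobenius (IsLocalRing.ResidueField A) p))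
    refine @LinearEquiv.length_eq (IsLocalRing.ResidueField A) (IsLocalRing.ResidueField (FRing p A))
      _ _ _ (IsLocalRing.ResidueField A) _ m3
      { toFun := fun x => x
        invFun := fun x => x
        left_inv := fun _ => rfl
        right_inv := fun _ => rfl
        map_add' := fun _ _ => rfl
        map_smul' := ?_ }
    intro a x
    obtain ⟨a, rfl⟩ := IsLocalRing.residue_surjective a
    rw [Algebra.smul_def]
    show IsLocalRing.residue A (a ^ p) * _ = (IsLocalRing.residue A a) ^ p * _
    rw [map_pow]
  rw [← h2]
  exact key

lemma fs_len_iter (p : ℕ) (hp : p.Prime) (A : Type*) [CommRing A] [IsLocalRing A] [ExpChar A p]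
    [ExpChar (IsLocalRing.ResidueField A) p] (r : ℕ∞)
    (hr : @Module.length (IsLocalRing.ResidueField A) (IsLocalRing.ResidueField A) _ _
      (Module.compHom _ (frobenius (IsLocalRing.ResidueField A) p)) = r) (e : ℕ)
    (M : Type*) [AddCommGroup M] [Module A M] :
    Module.length A (FE p e M) = Module.length A M * r ^ e := by
  induction e with
  | zero =>
    rw [pow_zero, mul_one]
    exact LinearEquiv.length_eq
      { toFun := fun x => x
        invFun := fun x => x
        left_inv := fun _ => rfl
        right_inv := fun _ => rfl
        map_add' := fun _ _ => rfl
        map_smul' := fun a x => by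
          show iterateFrobenius A p 0 a • (show M from x) = a • (show M from x)
          rw [iterateFrobenius_zero]; rfl }
  | succ e ih =>
    have h := fs_len_frob p hp A r hr (FE p e M)
    rw [ih, mul_assoc, ← pow_succ] at h
    rw [← h]
    let m1 : Module A (FE p e M) := Module.compHom (FE p e M) (frobenius A p)
    refine @LinearEquiv.length_eq A (FE p (e+1) M) _ _ _ (FE p e M) _ m1
      { toFun := fun x => x
        invFun := fun x => x
        left_inv := fun _ => rfl
        right_inv := fun _ => rfl
        map_add' := fun _ _ => rfl
        map_smul' := fun a x => ?_ }
    show iterateFrobenius A p (e+1) a • (show M from x) =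
      iterateFrobenius A p e (frobenius A p a) • (show M from x)
    rw [iterateFrobenius_def, iterateFrobenius_def, frobenius_def, ← pow_mul, pow_succ']

lemma fs_dual_top {κ V : Type*} [Field κ] [AddCommGroup V] [Module κ V] [FiniteDimensional κ V]
    (E : Submodule κ (Module.Dual κ V)) (h : E.dualCoannihilator = ⊥) : E = ⊤ := by
  rw [← Subspace.dualCoannihilator_dualAnnihilator_eq (W := E), h,
    Submodule.dualAnnihilator_bot]

lemma fs_ev {A κ F V : Type*} [CommRing A] [Field κ] [Algebra A κ]
    (hκ : Function.Surjective (algebraMap A κ)) [AddCommGroup F] [Module A F]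
    [AddCommGroup V] [Module κ V] [FiniteDimensional κ V] (j : V → F → κ)
    (hadd : ∀ v w x, j (v + w) x = j v x + j w x) (hsm : ∀ (c : κ) v x, j (c • v) x = c * j v x)
    (hx : ∀ v x y, j v (x + y) = j v x + j v y) (hxs : ∀ (a : A) v x, j v (a • x) = a • j v x)
    (hinj : ∀ v, (∀ x, j v x = 0) → v = 0) (N : Submodule A F)
    (hN : ∀ x, x ∈ N ↔ ∀ v, j v x = 0) : Module.length A (F ⧸ N) = Module.length κ V := by
  let ev : F →ₗ[A] Module.Dual κ V :=
    { toFun := fun x =>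
        { toFun := fun w => j w x
          map_add' := fun _ _ => hadd _ _ _
          map_smul' := fun _ _ => hsm _ _ _ }
      map_add' := fun x y => by ext w; exact hx w x y
      map_smul' := fun a x => by ext w; exact hxs a w x }
  have hE : (Submodule.span κ (Set.range ev)).restrictScalars A = LinearMap.range ev := by
    rw [Submodule.restrictScalars_span _ _ hκ, ← LinearMap.coe_range, Submodule.span_eq]
  have htop : Submodule.span κ (Set.range ev) = ⊤ := by
    apply fs_dual_top
    rw [eq_bot_iff]
    intro w hw
    rw [Submodule.mem_dualCoannihilator] at hw
    rw [Submodule.mem_bot]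
    exact hinj w fun x => hw (ev x) (Submodule.subset_span ⟨x, rfl⟩)
  have hev : Function.Surjective ev := by
    rw [← LinearMap.range_eq_top, ← hE, htop]
    rfl
  have hk : N = LinearMap.ker ev := by
    ext x
    rw [hN, LinearMap.mem_ker]
    exact ⟨fun h => LinearMap.ext h, fun h v => LinearMap.congr_fun h v⟩
  rw [hk, (LinearMap.quotKerEquivOfSurjective ev hev).length_eq,
    Module.length_eq_of_surjective (S := A) (R := κ) hκ, Module.length_eq_finrank,
    Subspace.dual_finrank_eq, ← Module.length_eq_finrank]

open IsLocalRing in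
lemma fs_split (p : ℕ) (hp : p.Prime) (A : Type*) [CommRing A] [IsLocalRing A] [ExpChar A p]
    [ExpChar (IsLocalRing.ResidueField A) p] (r : ℕ∞)
    (hr : @Module.length (IsLocalRing.ResidueField A) (IsLocalRing.ResidueField A) _ _
      (Module.compHom _ (frobenius (IsLocalRing.ResidueField A) p)) = r) (e : ℕ)
    (P : Submodule A (A →+ A)) (hP : ∀ φ ∈ P, IsCartierMap p A e φ)
    (I : Ideal A) (hI : ∀ x, x ∈ I ↔ ∀ φ ∈ P, φ x ∈ maximalIdeal A) (n : ℕ)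
    (hn : ((n : ℕ∞) : WithBot ℕ∞) = splitNum A (P : Set (A →+ A))) :
    Module.length A (A ⧸ I) * r ^ e = n := by
  let κ := ResidueField A
  have hκ : Function.Surjective (algebraMap A κ) := residue_surjective
  let F := FE p e A
  let β : P →ₗ[A] (F →ₗ[A] κ) :=
    { toFun := fun φ =>
        { toFun := fun x => residue A (φ.1 x)
          map_add' := fun x y => by
            show residue A (φ.1 ((show A from x) + (show A from y))) = _
            rw [map_add, map_add]
          map_smul' := fun a x => by
            show residue A (φ.1 (iterateFrobenius A p e a • (show A from x))) = _
            rw [iterateFrobenius_def, hP φ.1 φ.2 a, smul_eq_mul, map_mul]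
            rfl }
      map_add' := fun φ ψ => by
        ext x
        show residue A (φ.1 x + ψ.1 x) = _
        rw [map_add]; rfl
      map_smul' := fun a φ => by
        ext x
        show residue A (a * φ.1 x) = _
        rw [map_mul]; rfl }
  let W : Submodule κ (F →ₗ[A] κ) := Submodule.span κ (Set.range β)
  have hW : W.restrictScalars A = LinearMap.range β := by
    rw [Submodule.restrictScalars_span _ _ hκ, ← LinearMap.coe_range, Submodule.span_eq]
  have hker : ∀ φ : P, β φ = 0 ↔ ∀ x, φ.1 x ∈ maximalIdeal A := by
    intro φ
    refine ⟨fun h x => (residue_eq_zero_iff _).mp (LinearMap.congr_fun h x), fun h => ?_⟩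
    ext x
    exact (residue_eq_zero_iff _).mpr (h x)
  -- length of W
  have hWlen : Module.length κ W = n := by
    rw [← Module.length_eq_of_surjective (S := A) (R := κ) hκ]
    have h1 : Module.length A W = Module.length A (LinearMap.range β) := by
      rw [← hW]; rfl
    rw [h1, ← (LinearMap.quotKerEquivRange (R := A) (M := P) (M₂ := F →ₗ[A] κ) β).length_eq]
    have h2 : ((n : ℕ∞)) = Module.length A (Submodule.map
        (Submodule.span A { ϑ ∈ (P : Set (A →+ A)) | ∀ x, ϑ x ∈ maximalIdeal A }).mkQ
        (Submodule.span A (P : Set (A →+ A)))) := by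
      apply WithBot.coe_injective
      rw [Module.coe_length]
      exact hn
    rw [h2]
    let N := Submodule.span A { ϑ ∈ (P : Set (A →+ A)) | ∀ x, ϑ x ∈ maximalIdeal A }
    have hN : ∀ ϑ ∈ N, ∀ x, ϑ x ∈ maximalIdeal A := by
      intro ϑ h
      induction h using Submodule.span_induction with
      | mem y hy => exact hy.2
      | zero => intro x; simp
      | add f g _ _ hf hg => intro x; exact add_mem (hf x) (hg x)
      | smul a f _ hf => intro x; exact Ideal.mul_mem_left _ _ (hf x)
    let g : P →ₗ[A] ((A →+ A) ⧸ N) := N.mkQ.comp P.subtype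
    have h3 : Submodule.map N.mkQ (Submodule.span A (P : Set (A →+ A))) =
        LinearMap.range g := by
      rw [LinearMap.range_comp, Submodule.range_subtype, Submodule.span_eq]
    show _ = Module.length A (Submodule.map N.mkQ (Submodule.span A (P : Set (A →+ A))))
    rw [h3, ← (LinearMap.quotKerEquivRange (R := A) (M := P) (M₂ := (A →+ A) ⧸ N) g).length_eq]
    have h4 : LinearMap.ker β = LinearMap.ker g := by
      ext φ
      rw [LinearMap.mem_ker, LinearMap.mem_ker, hker]
      show _ ↔ Submodule.Quotient.mk φ.1 = 0
      rw [Submodule.Quotient.mk_eq_zero]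
      exact ⟨fun h => Submodule.subset_span ⟨φ.2, h⟩, fun h => hN _ h⟩
    rw [h4]
  have hfin : FiniteDimensional κ W := by
    have : Module.length κ W ≠ ⊤ := by rw [hWlen]; exact ENat.natCast_ne_top n
    rw [Module.length_ne_top_iff, isFiniteLength_iff_isNoetherian_isArtinian] at this
    have := this.1
    infer_instance
  let π : F →ₗ[A] FE p e (A ⧸ I) :=
    { toFun := fun x => (Submodule.Quotient.mk (show A from x) : A ⧸ I)
      map_add' := fun _ _ => rfl
      map_smul' := fun _ _ => rfl }
  have hπ : Function.Surjective π := Submodule.Quotient.mk_surjective I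
  have hkk := fs_ev (A := A) (κ := ResidueField A) (F := F) (V := W) hκ (fun w x => w.1 x)
    (fun _ _ _ => rfl) (fun _ _ _ => rfl) (fun v x y => map_add v.1 x y)
    (fun a v x => map_smul v.1 a x) (fun v h => Subtype.ext (LinearMap.ext h))
    (LinearMap.ker π) (by
      intro x
      rw [LinearMap.mem_ker]
      have h1 : π x = 0 ↔ (show A from x) ∈ I := Submodule.Quotient.mk_eq_zero I
      rw [h1, hI]
      constructor
      · intro h w
        have hw : w.1 ∈ W.restrictScalars A := w.2
        rw [hW] at hw
        obtain ⟨φ, hφ⟩ := hw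
        show w.1 x = 0
        rw [← hφ]
        exact (residue_eq_zero_iff _).mpr (h φ.1 φ.2)
      · intro h φ hφ
        exact (residue_eq_zero_iff _).mp
          (h ⟨β ⟨φ, hφ⟩, Submodule.subset_span ⟨_, rfl⟩⟩))
  rw [← fs_len_iter p hp A r hr e (A ⧸ I), ← (LinearMap.quotKerEquivOfSurjective π hπ).length_eq]
  exact hkk.trans hWlen

lemma fs_splitNum_span (A : Type*) [CommRing A] [IsLocalRing A] (D : Set (A →+ A))
    (hD : ∀ φ ∈ Submodule.span A D, φ ∈ D ∨ φ = 0) :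
    splitNum A D = splitNum A (Submodule.span A D : Set (A →+ A)) := by
  have h1 : Submodule.span A { ϑ ∈ D | ∀ x, ϑ x ∈ IsLocalRing.maximalIdeal A } =
      Submodule.span A { ϑ ∈ (Submodule.span A D : Set (A →+ A)) |
        ∀ x, ϑ x ∈ IsLocalRing.maximalIdeal A } := by
    apply le_antisymm
    · exact Submodule.span_mono fun ϑ h => ⟨Submodule.subset_span h.1, h.2⟩
    · rw [Submodule.span_le]
      rintro ϑ ⟨h, h'⟩
      rcases hD ϑ h with h0 | rfl
      · exact Submodule.subset_span ⟨h0, h'⟩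
      · exact Submodule.zero_mem _
  unfold splitNum
  rw [h1, Submodule.span_eq (Submodule.span A D)]

lemma fs_resdeg (p : ℕ) (hp : p.Prime) (A : Type*) [CommRing A] [IsLocalRing A] [CharP A p]
    [CharP (IsLocalRing.ResidueField A) p] [ExpChar (IsLocalRing.ResidueField A) p]
    (hFf : letI := frobModule p hp A; Module.Finite A (FrobMod A)) (r : ℕ)
    (hr : letI := frobModule p hp (IsLocalRing.ResidueField A)
      r = Module.finrank (IsLocalRing.ResidueField A) (FrobMod (IsLocalRing.ResidueField A))) :
    @Module.length (IsLocalRing.ResidueField A) (IsLocalRing.ResidueField A) _ _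
      (Module.compHom _ (frobenius (IsLocalRing.ResidueField A) p)) = r ∧ 0 < r := by
  let m1 := frobModule p hp A
  let m2 := frobModule p hp (IsLocalRing.ResidueField A)
  have hFf' : Module.Finite A (FrobMod A) := hFf
  have : RingHomSurjective (IsLocalRing.residue A) := ⟨IsLocalRing.residue_surjective⟩
  let f : FrobMod A →ₛₗ[IsLocalRing.residue A] FrobMod (IsLocalRing.ResidueField A) :=
    { toFun := fun x => IsLocalRing.residue A (show A from x)
      map_add' := fun x y => RingHom.map_add (IsLocalRing.residue A) x y
      map_smul' := fun a x => by
        show IsLocalRing.residue A (a ^ p * (show A from x)) =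
          (IsLocalRing.residue A a) ^ p * IsLocalRing.residue A (show A from x)
        rw [map_mul, map_pow] }
  have hfin : Module.Finite (IsLocalRing.ResidueField A) (FrobMod (IsLocalRing.ResidueField A)) :=
    Module.Finite.of_surjective f (IsLocalRing.residue_surjective (R := A))
  have : Nontrivial (FrobMod (IsLocalRing.ResidueField A)) :=
    inferInstanceAs (Nontrivial (IsLocalRing.ResidueField A))
  refine ⟨?_, ?_⟩
  · rw [hr]
    exact Module.length_eq_finrank (IsLocalRing.ResidueField A)
      (FrobMod (IsLocalRing.ResidueField A))
  · rw [hr]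
    exact Module.finrank_pos

lemma fs_level (p : ℕ) (hp : p.Prime) (R S : Type*) [CommRing R] [CommRing S]
    [IsLocalRing R] [IsLocalRing S] [CharP R p] [CharP S p]
    [Algebra R S] [IsLocalHom (algebraMap R S)]
    [ExpChar (IsLocalRing.ResidueField R) p] [ExpChar (IsLocalRing.ResidueField S) p]
    (T : S →ₗ[R] R) (hTsurj : Function.Surjective ⇑T)
    (hTn : ∀ s ∈ IsLocalRing.maximalIdeal S, T s ∈ IsLocalRing.maximalIdeal R)
    (C : CartierStructure p R R) (tr : ℕ → (R →+ R) → (S →+ S)) (e : ℕ) (he : 1 ≤ e)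
    (htr : ∀ φ ∈ C.carrier e,
      IsCartierMap p S e (tr e φ) ∧ IsTranspose p T e φ (tr e φ))
    (aR aS : ℕ)
    (haR : ((aR : ℕ∞) : WithBot ℕ∞) = splitNum R (C.carrier e))
    (haS : ((aS : ℕ∞) : WithBot ℕ∞) = splitNum S (pushFam C.carrier tr e))
    (rk rl : ℕ)
    (hrk : @Module.length (IsLocalRing.ResidueField R) (IsLocalRing.ResidueField R) _ _
      (Module.compHom _ (frobenius (IsLocalRing.ResidueField R) p)) = rk)
    (hrl : @Module.length (IsLocalRing.ResidueField S) (IsLocalRing.ResidueField S) _ _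
      (Module.compHom _ (frobenius (IsLocalRing.ResidueField S) p)) = rl) 
    (lk : ℕ) (hlk : Module.length (IsLocalRing.ResidueField R) (IsLocalRing.ResidueField S) = lk) :
    ∃ (I : Ideal R) (J : Submodule R S), (∀ x ∈ IsLocalRing.maximalIdeal R, x ^ p ^ e ∈ I) ∧
      (∀ s, s ∈ J ↔ ∀ x, T (s * x) ∈ I) ∧
      Module.length R (R ⧸ I) * (rk : ℕ∞) ^ e = aR ∧
      Module.length R (S ⧸ J) * (rl : ℕ∞) ^ e = lk * aS := by
  have : ExpChar R p := .prime hp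
  have : ExpChar S p := .prime hp
  let m := IsLocalRing.maximalIdeal R
  let I : Ideal R :=
    { carrier := {x | ∀ φ ∈ C.carrier e, φ x ∈ m}
      add_mem' := fun {x y} hx hy φ hφ => by rw [map_add]; exact add_mem (hx φ hφ) (hy φ hφ)
      zero_mem' := fun φ _ => by rw [map_zero]; exact zero_mem _
      smul_mem' := fun a x hx φ hφ => hx _ (C.mul_mem e he a φ hφ) }
  have hImem : ∀ x, x ∈ I ↔ ∀ φ ∈ C.carrier e, φ x ∈ m := fun x => Iff.rfl
  have hDR : ∀ φ ∈ Submodule.span R (C.carrier e), φ ∈ C.carrier e ∨ φ = 0 := by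
    intro φ h
    induction h using Submodule.span_induction with
    | mem y hy => exact Or.inl hy
    | zero => exact Or.inr rfl
    | add f g _ _ hf hg =>
      rcases hf with hf | rfl
      · rcases hg with hg | rfl
        · exact Or.inl (C.add_mem e he f hf g hg)
        · rw [add_zero]; exact Or.inl hf
      · rw [zero_add]; exact hg
    | smul a f _ hf =>
      rcases hf with hf | rfl
      · exact Or.inl (C.smul_mem e he a f hf)
      · rw [smul_zero]; exact Or.inr rfl
  let J : Ideal S :=
    { carrier := {s | ∀ x, T (s * x) ∈ I}
      add_mem' := fun {x y} hx hy z => by rw [add_mul, map_add]; exact add_mem (hx z) (hy z)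
      zero_mem' := fun z => by rw [zero_mul, map_zero]; exact zero_mem _
      smul_mem' := fun a x hx z => by
        rw [smul_eq_mul, mul_comm a, mul_assoc]; exact hx _ }
  have hJmem : ∀ s, s ∈ J ↔ ∀ x, T (s * x) ∈ I := fun x => Iff.rfl
  have hDS : ∀ ψ ∈ Submodule.span S (pushFam C.carrier tr e), ψ ∈ pushFam C.carrier tr e := by
    intro ψ h
    induction h using Submodule.span_induction with
    | mem y hy => exact hy
    | zero => exact ⟨0, Fin.elim0, Fin.elim0, fun i => i.elim0, by simp⟩
    | add f g _ _ hf hg =>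
      obtain ⟨k, φ, s, hφ, rfl⟩ := hf
      obtain ⟨k', φ', s', hφ', rfl⟩ := hg
      refine ⟨k + k', Fin.append φ φ', Fin.append s s', ?_, ?_⟩
      · intro i
        refine Fin.addCases (fun i => ?_) (fun i => ?_) i
        · rw [Fin.append_left]; exact hφ i
        · rw [Fin.append_right]; exact hφ' i
      · rw [Fin.sum_univ_add]
        simp only [Fin.append_left, Fin.append_right]
    | smul a f _ hf =>
      obtain ⟨k, φ, s, hφ, rfl⟩ := hf
      refine ⟨k, φ, fun i => a ^ p ^ e * s i, hφ, ?_⟩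
      rw [Finset.smul_sum]
      refine Finset.sum_congr rfl fun i _ => ?_
      ext x
      have := (htr (φ i) (hφ i)).1 a (s i * x)
      rw [smul_eq_mul, smul_eq_mul] at this
      show a * tr e (φ i) (s i * x) = tr e (φ i) (a ^ p ^ e * s i * x)
      rw [mul_assoc, this]
  have hPS : ∀ ψ ∈ pushFam C.carrier tr e, IsCartierMap p S e ψ := by
    rintro ψ ⟨k, φ, s, hφ, rfl⟩ a x
    rw [AddMonoidHom.finsetSum_apply, AddMonoidHom.finsetSum_apply, Finset.smul_sum]
    refine Finset.sum_congr rfl fun i _ => ?_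
    show tr e (φ i) (s i * (a ^ p ^ e • x)) = a • tr e (φ i) (s i * x)
    rw [← (htr (φ i) (hφ i)).1 a, mul_smul_comm]
  have hJ : ∀ x, x ∈ J ↔ ∀ ψ ∈ pushFam C.carrier tr e, ψ x ∈ IsLocalRing.maximalIdeal S := by
    intro x
    rw [hJmem]
    constructor
    · rintro h ψ ⟨k, φ, s, hφ, rfl⟩
      rw [AddMonoidHom.finsetSum_apply]
      refine Ideal.sum_mem _ fun i _ => ?_
      show tr e (φ i) (s i * x) ∈ _
      rw [IsLocalRing.mem_maximalIdeal, mem_nonunits_iff]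
      rintro ⟨u, hu⟩
      obtain ⟨w, hw⟩ := hTsurj 1
      have h1 := (htr (φ i) (hφ i)).2 (s i * x) (↑u⁻¹ * w)
      rw [← hu, ← mul_assoc, Units.mul_inv, one_mul, hw] at h1
      have h2 : (φ i) (T (s i * x * (↑u⁻¹ * w) ^ p ^ e)) ∈ m := by
        have := h (s i * (↑u⁻¹ * w) ^ p ^ e)
        rw [← mul_assoc, mul_comm x] at this
        exact this (φ i) (hφ i)
      rw [← h1] at h2
      exact (Ideal.ne_top_iff_one m).mp (IsLocalRing.maximalIdeal.isMaximal R).ne_top h2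
    · intro h y φ hφ
      have h1 := (htr φ hφ).2 (y * x) 1
      rw [one_pow, mul_one, mul_one, mul_comm y] at h1
      rw [← h1]
      apply hTn
      have := h ((tr e φ).comp (AddMonoidHom.mulLeft y))
        ⟨1, fun _ => φ, fun _ => y, fun _ => hφ, by simp⟩
      rw [mul_comm x]
      exact this
  refine ⟨I, J.restrictScalars R, ?_, fun s => Iff.rfl, ?_, ?_⟩
  · intro x hx φ hφ
    have := C.cartier_mem e he φ hφ x 1
    rw [smul_eq_mul, mul_one] at this
    rw [this]
    exact Ideal.mul_mem_right _ _ hx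
  · refine fs_split p hp R rk hrk e (Submodule.span R (C.carrier e)) ?_ I ?_ aR ?_
    · intro φ h
      rcases hDR φ h with h | rfl
      · exact C.cartier_mem e he φ h
      · intro a x; simp
    · intro x
      rw [hImem]
      refine ⟨fun h φ hφ => ?_, fun h φ hφ => h φ (Submodule.subset_span hφ)⟩
      rcases hDR φ hφ with h' | rfl
      · exact h φ h'
      · exact zero_mem _
    · rw [haR]; exact fs_splitNum_span R _ hDR
  · have key : Module.length S (S ⧸ J) * (rl : ℕ∞) ^ e = aS := by
      refine fs_split p hp S rl hrl e (Submodule.span S (pushFam C.carrier tr e)) ?_ J ?_ aS ?_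
      · exact fun φ h => hPS φ (hDS φ h)
      · intro x
        rw [hJ]
        exact ⟨fun h φ hφ => h φ (hDS φ hφ), fun h φ hφ => h φ (Submodule.subset_span hφ)⟩
      · rw [haS]; exact fs_splitNum_span S _ fun φ h => Or.inl (hDS φ h)
    rw [(Submodule.Quotient.restrictScalarsEquiv R J).length_eq,
      IsLocalRing.length_restrictScalars R S (S ⧸ J), hlk, ← key]
    ring

/-- **Transformation rule for the F-signature under finite covers:**
`[l : k] · s(S, f^*C) = [L : K] · s(R, C)`. -/
theorem fSignature_transformation_rule
    (p : ℕ) (hp : p.Prime) (R S : Type*) [CommRing R] [CommRing S]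
    [IsDomain R] [IsDomain S] [IsNoetherianRing R] [IsNoetherianRing S]
    [IsLocalRing R] [IsLocalRing S] [CharP R p] [CharP S p]
    [Algebra R S] [Module.Finite R S]
    (hinj : Function.Injective (algebraMap R S))
    (hloc : (IsLocalRing.maximalIdeal S).comap (algebraMap R S) = IsLocalRing.maximalIdeal R)
    [IsLocalHom (algebraMap R S)]
    (hFfR : letI := frobModule p hp R; Module.Finite R (FrobMod R))
    (hFfS : letI := frobModule p hp S; Module.Finite S (FrobMod S))
    (T : S →ₗ[R] R)
    (hσinj : Function.Injective ⇑(sigmaT R S T))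
    (K : Type*) [Field K] [Algebra R K] [IsFractionRing R K]
    (hσgen : Function.Bijective ⇑(LinearMap.baseChange K (sigmaT R S T)))
    (hTsurj : Function.Surjective ⇑T)
    (hTn : ∀ s ∈ IsLocalRing.maximalIdeal S, T s ∈ IsLocalRing.maximalIdeal R)
    (C : CartierStructure p R R) (tr : ℕ → (R →+ R) → (S →+ S))
    (htr : ∀ e, 1 ≤ e → ∀ φ ∈ C.carrier e,
      IsCartierMap p S e (tr e φ) ∧ IsTranspose p T e φ (tr e φ))
    (aR aS : ℕ → ℕ)
    (haR : ∀ e, 1 ≤ e → ((aR e : ℕ∞) : WithBot ℕ∞) = splitNum R (C.carrier e))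
    (haS : ∀ e, 1 ≤ e → ((aS e : ℕ∞) : WithBot ℕ∞) = splitNum S (pushFam C.carrier tr e))
    (hex : ∃ e, 1 ≤ e ∧ aR e ≠ 0)
    (n₀ : ℕ) (hn₀pos : 0 < n₀)
    (hn₀dvd : ∀ e, 1 ≤ e → aR e ≠ 0 → n₀ ∣ e)
    (hn₀gcd : ∀ m : ℕ, (∀ e, 1 ≤ e → aR e ≠ 0 → m ∣ e) → m ∣ n₀)
    (d : ℕ) (hd : ringKrullDim R = d) (hd' : ringKrullDim S = d)
    [CharP (IsLocalRing.ResidueField R) p] [CharP (IsLocalRing.ResidueField S) p]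
    (rk : ℕ)
    (hrk : letI := frobModule p hp (IsLocalRing.ResidueField R)
      rk = Module.finrank (IsLocalRing.ResidueField R) (FrobMod (IsLocalRing.ResidueField R)))
    (rl : ℕ)
    (hrl : letI := frobModule p hp (IsLocalRing.ResidueField S)
      rl = Module.finrank (IsLocalRing.ResidueField S) (FrobMod (IsLocalRing.ResidueField S)))
    (lk : ℕ)
    (hlk : letI : Algebra (IsLocalRing.ResidueField R) (IsLocalRing.ResidueField S) :=
        (IsLocalRing.ResidueField.map (algebraMap R S)).toAlgebra
      lk = Module.finrank (IsLocalRing.ResidueField R) (IsLocalRing.ResidueField S))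
    (L : Type*) [Field L] [Algebra S L] [IsFractionRing S L] [Algebra K L]
    [Algebra R L] [IsScalarTower R K L] [IsScalarTower R S L]
    (nLK : ℕ) (hnLK : nLK = Module.finrank K L)
    (sR sS : ℝ)
    (hsR : Filter.Tendsto
      (fun e : ℕ => (aR (n₀ * e) : ℝ) / ((p : ℝ) ^ (n₀ * e * d) * (rk : ℝ) ^ (n₀ * e)))
      Filter.atTop (nhds sR))
    (hsS : Filter.Tendsto
      (fun e : ℕ => (aS (n₀ * e) : ℝ) / ((p : ℝ) ^ (n₀ * e * d) * (rl : ℝ) ^ (n₀ * e)))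
      Filter.atTop (nhds sS)) :
    (lk : ℝ) * sS = (nLK : ℝ) * sR := by
  classical
  have : ExpChar (IsLocalRing.ResidueField R) p := .prime hp
  have : ExpChar (IsLocalRing.ResidueField S) p := .prime hp
  obtain ⟨hrk', hrk0⟩ := fs_resdeg p hp R hFfR rk hrk
  obtain ⟨hrl', hrl0⟩ := fs_resdeg p hp S hFfS rl hrl
  have hlk' : Module.length (IsLocalRing.ResidueField R) (IsLocalRing.ResidueField S) = lk := by
    have : Module.Finite (IsLocalRing.ResidueField R) (IsLocalRing.ResidueField S) := by
      infer_instance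
    rw [hlk]
    exact Module.length_eq_finrank _ _
  have hn : nLK = Module.finrank R S := by
    have : FaithfulSMul R S := (faithfulSMul_iff_algebraMap_injective R S).mpr hinj
    rw [hnLK]
    exact IsFractionRing.finrank_eq R K S L
  obtain ⟨c, s, t, hc, hcs, hst⟩ := fs_basis T (fun s hs => hσinj (by
    rw [map_zero]
    exact LinearMap.ext fun x => hs x))
  obtain ⟨N, hN⟩ := fs_bound d hd c hc
  obtain ⟨μ, g, hg⟩ := Module.Finite.exists_fin (R := R) (M := S)
  have key : ∀ e, 1 ≤ e →
      |(lk : ℝ) * ((aS e : ℝ) / ((p : ℝ) ^ (e * d) * (rl : ℝ) ^ e)) -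
        (nLK : ℝ) * ((aR e : ℝ) / ((p : ℝ) ^ (e * d) * (rk : ℝ) ^ e))| ≤
      ((μ + nLK) * N : ℝ) / (p : ℝ) ^ e := by
    intro e he
    obtain ⟨I, J, hI, hJ, h1, h2⟩ := fs_level p hp R S T hTsurj hTn C tr e he (htr e he)
      (aR e) (aS e) (haR e he) (haS e he) rk rl hrk' hrl' lk hlk'
    have hq : 1 ≤ p ^ e := Nat.one_le_pow _ _ hp.pos
    have h3 := hN (p ^ e) hq I hI
    have fin1 : Module.length R (R ⧸ I) ≠ ⊤ := by
      intro h
      rw [h, ENat.top_mul (pow_ne_zero _ (by exact_mod_cast hrk0.ne'))] at h1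
      exact ENat.natCast_ne_top _ h1.symm
    have fin2 : Module.length R (S ⧸ J) ≠ ⊤ := by
      intro h
      rw [h, ENat.top_mul (pow_ne_zero _ (by exact_mod_cast hrl0.ne')), ← Nat.cast_mul] at h2
      exact ENat.natCast_ne_top _ h2.symm
    have fin3 : Module.length R (R ⧸ (I ⊔ Ideal.span {c})) ≠ ⊤ :=
      ne_top_of_le_ne_top fin1 (fs_length_mono le_sup_left)
    obtain ⟨h4, h5⟩ := fs_compare T I J hJ fin2 g hg c s t hcs hst
    obtain ⟨LR, hLR⟩ := ENat.ne_top_iff_exists.mp fin1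
    obtain ⟨LS, hLS⟩ := ENat.ne_top_iff_exists.mp fin2
    obtain ⟨X, hX⟩ := ENat.ne_top_iff_exists.mp fin3
    rw [← hLR] at h1 h4 h5
    rw [← hLS] at h2 h4 h5
    rw [← hX] at h3 h4 h5
    rw [← hn] at h4 h5
    have h1' : (LR : ℝ) * (rk : ℝ) ^ e = aR e := by exact_mod_cast h1
    have h2' : (LS : ℝ) * (rl : ℝ) ^ e = lk * aS e := by exact_mod_cast h2
    have h3' : (X : ℝ) * (p : ℝ) ^ e ≤ N * ((p : ℝ) ^ e) ^ d := by exact_mod_cast h3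
    have h4' : (LS : ℝ) ≤ nLK * LR + μ * X := by exact_mod_cast h4
    have h5' : (nLK : ℝ) * LR ≤ LS + nLK * X := by exact_mod_cast h5
    have hrkR : (0 : ℝ) < (rk : ℝ) ^ e := pow_pos (by exact_mod_cast hrk0) _
    have hrlR : (0 : ℝ) < (rl : ℝ) ^ e := pow_pos (by exact_mod_cast hrl0) _
    have hqR : (0 : ℝ) < (p : ℝ) ^ e := pow_pos (by exact_mod_cast hp.pos) _
    rw [pow_mul, ← h1']
    have hqd : (0 : ℝ) < ((p : ℝ) ^ e) ^ d := pow_pos hqR _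
    have e1 : (lk : ℝ) * ((aS e : ℝ) / (((p : ℝ) ^ e) ^ d * (rl : ℝ) ^ e)) =
        LS / ((p : ℝ) ^ e) ^ d := by
      rw [← mul_div_assoc, ← h2']
      field_simp
    have e2 : (nLK : ℝ) * ((LR : ℝ) * (rk : ℝ) ^ e / (((p : ℝ) ^ e) ^ d * (rk : ℝ) ^ e)) =
        nLK * LR / ((p : ℝ) ^ e) ^ d := by
      field_simp
    rw [e1, e2, ← sub_div, abs_div, abs_of_pos hqd, div_le_div_iff₀ hqd hqR]
    have hXn : (0 : ℝ) ≤ X := Nat.cast_nonneg _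
    have hμ : (0 : ℝ) ≤ μ := Nat.cast_nonneg _
    have hnn : (0 : ℝ) ≤ nLK := Nat.cast_nonneg _
    have h6 : |(LS : ℝ) - nLK * LR| ≤ (μ + nLK) * X := by
      rw [abs_le]
      constructor <;> nlinarith [mul_nonneg hμ hXn, mul_nonneg hnn hXn]
    calc _ ≤ ((μ + nLK) * X : ℝ) * (p : ℝ) ^ e := by gcongr
      _ = (μ + nLK) * (X * (p : ℝ) ^ e) := by ring
      _ ≤ (μ + nLK) * (N * ((p : ℝ) ^ e) ^ d) := by gcongr
      _ = _ := by ring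
  have hlim := (hsS.const_mul (lk : ℝ)).sub (hsR.const_mul (nLK : ℝ))
  have hzero : Filter.Tendsto (fun e : ℕ => ((μ + nLK) * N : ℝ) / (p : ℝ) ^ (n₀ * e))
      Filter.atTop (nhds 0) := by
    refine Filter.Tendsto.const_div_atTop ?_ _
    refine (tendsto_pow_atTop_atTop_of_one_lt (by exact_mod_cast hp.one_lt)).comp ?_
    exact Filter.tendsto_id.const_mul_atTop' hn₀pos
  have hlim0 := squeeze_zero_norm' (f := fun e : ℕ =>
    (lk : ℝ) * ((aS (n₀ * e) : ℝ) / ((p : ℝ) ^ (n₀ * e * d) * (rl : ℝ) ^ (n₀ * e))) -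
    (nLK : ℝ) * ((aR (n₀ * e) : ℝ) / ((p : ℝ) ^ (n₀ * e * d) * (rk : ℝ) ^ (n₀ * e))))
    (by
      filter_upwards [Filter.eventually_ge_atTop 1] with e he
      exact key (n₀ * e) (Nat.mul_pos hn₀pos he)) hzero
  exact sub_eq_zero.mp (tendsto_nhds_unique hlim hlim0)
end

section
/- Fix a prime p. Let (R,m,k) be an F-finite noetherian local domain of characteristic p with fraction field K, let C be a Cartier subalgebra of C_R with a_e(R,C) ≠ 0 for some e ≥ 1, and let M be a finitely generated R-module with generic rank g := dim_K(K ⊗_R M). For each e ≥ 1, let M^♮_e be the additive subgroup of { additive maps ϑ : M → R with ϑ(r^{p^e}·x) = r·ϑ(x) } generated by the maps x ↦ φ(ρ(x)) with φ ∈ C_e and ρ ∈ Hom_R(M,R), and set a_e(M^♮) := length_R( M^♮_e / { ϑ ∈ M^♮_e : ϑ(M) ⊆ m } ). Let n₀ := gcd{ e ≥ 1 : a_e(R,C) ≠ 0 }, d := dim R, and r_k := [k^{1/p} : k]. If the sequence e ↦ a_{n₀e}(R,C)/(p^{n₀e·d}·r_k^{n₀e}) converges to a real number s, then the sequence e ↦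 a_{n₀e}(M^♮)/(p^{n₀e·d}·r_k^{n₀e}) converges to g·s. -/
/-- The subgroup `M^♮_e` generated by the maps `φ ∘ ρ`, `φ ∈ C_e`, `ρ ∈ Hom_R(M,R)`. -/
def natFam {R : Type*} [CommRing R] (D : ℕ → Set (R →+ R)) (M : Type*) [AddCommGroup M]
    [Module R M] (e : ℕ) : Set (M →+ R) :=
  (AddSubgroup.closure
    { ϑ : M →+ R | ∃ φ ∈ D e, ∃ ρ : M →ₗ[R] R, ϑ = φ.comp ρ.toAddMonoidHom } : Set (M →+ R))


theorem aux_lattice (R : Type*) [CommRing R] [IsDomain R] (K : Type*) [Field K] [Algebra R K]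
    [IsFractionRing R K] (M : Type*) [AddCommGroup M] [Module R M] [Module.Finite R M] :
    ∃ (c : R) (α : (Fin (Module.finrank K (TensorProduct R K M)) → R) →ₗ[R] M)
      (β : M →ₗ[R] (Fin (Module.finrank K (TensorProduct R K M)) → R)), c ≠ 0 ∧
      (∀ x, α (β x) = c • x) ∧ (∀ y, β (α y) = c • y) := by
  classical
  have hfr : Module.finrank K (TensorProduct R K M) = Module.finrank R M :=
    haveI : FaithfulSMul R K :=
      (faithfulSMul_iff_algebraMap_injective R K).mpr (IsFractionRing.injective R K)
    (TensorProduct.isBaseChange R M K).finrank_eq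
  rw [hfr]
  obtain ⟨v, hv⟩ := exists_linearIndependent_of_le_finrank (le_refl (Module.finrank R M))
  have hx : ∀ x : M, ∃ c : R, c ≠ 0 ∧ c • x ∈ Submodule.span R (Set.range v) := by
    intro x
    by_contra! hcon
    have := LinearIndependent.finCons' x v hv (by
      intro c y hy h
      by_contra hc
      refine hcon c hc ?_
      rw [eq_neg_of_add_eq_zero_left h]
      exact neg_mem hy)
    have := this.fintype_card_le_finrank
    simp at this
  choose c hc0 hc using hx
  obtain ⟨s, hs⟩ := (Module.Finite.fg_top : (⊤ : Submodule R M).FG)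
  let C : R := ∏ x ∈ s, c x
  have hC : ∀ x : M, C • x ∈ Submodule.span R (Set.range v) := by
    have : (⊤ : Submodule R M) ≤ (Submodule.span R (Set.range v)).comap (LinearMap.lsmul R M C) := by
      rw [← hs, Submodule.span_le]
      intro x hx
      have h1 : C = (∏ y ∈ s.erase x, c y) * c x := (Finset.prod_erase_mul s c hx).symm
      simp only [Submodule.comap_coe, Set.mem_preimage, LinearMap.lsmul_apply, SetLike.mem_coe]
      rw [h1, mul_smul]
      exact Submodule.smul_mem _ _ (hc x)
    intro x
    exact this (Submodule.mem_top (x := x))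
  let E := (Module.Basis.span hv).equivFun
  refine ⟨C, (Submodule.subtype _) ∘ₗ E.symm.toLinearMap,
    E.toLinearMap ∘ₗ (LinearMap.lsmul R M C).codRestrict _ hC, Finset.prod_ne_zero_iff.mpr fun x _ => hc0 x, ?_, ?_⟩
  · intro x
    simp [-LinearMap.lsmul_apply]
    rfl
  · intro y
    have : (LinearMap.lsmul R M C).codRestrict _ hC ((E.symm y : Submodule.span R (Set.range v)) : M) = C • E.symm y := by
      ext; rfl
    simp [this]

theorem aux_len_sup {R : Type*} [CommRing R] (J : Ideal R) (x : R) (a : ℕ) :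
    Module.length R (R ⧸ (J ⊔ Ideal.span {x ^ a})) ≤ a * Module.length R (R ⧸ (J ⊔ Ideal.span {x})) := by
  induction a with
  | zero => 
    have : J ⊔ Ideal.span {x ^ 0} = ⊤ := by simp
    rw [this]
    have : Subsingleton (R ⧸ (⊤ : Ideal R)) := Ideal.Quotient.subsingleton_iff.mpr rfl
    simp
  | succ a ih =>
    let I1 := J ⊔ Ideal.span {x}
    let I := J ⊔ Ideal.span {x ^ (a+1)}
    let I2 := J ⊔ Ideal.span {x ^ a}
    have h12 : I ≤ I2 := sup_le le_sup_left ((Ideal.span_singleton_le_span_singleton.mpr (pow_dvd_pow x (by omega))).trans le_sup_right)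
    have hmul : I1 ≤ Submodule.comap (LinearMap.mulLeft R (x^a)) I := by
      refine sup_le ?_ ?_
      · intro j hj
        exact Ideal.mul_mem_left _ _ (Ideal.mem_sup_left hj)
      · rw [Ideal.span_singleton_le_iff_mem]
        show x^a * x ∈ I
        rw [← pow_succ]
        exact Ideal.mem_sup_right (Ideal.mem_span_singleton_self _)
    let f : (R ⧸ I1) →ₗ[R] (R ⧸ I) := Submodule.mapQ I1 I (LinearMap.mulLeft R (x^a)) hmul
    let g : (R ⧸ I) →ₗ[R] (R ⧸ I2) := Submodule.factor h12
    have hg : Function.Surjective g := Submodule.factor_surjective h12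
    have hlen := Module.length_eq_add_of_exact (LinearMap.ker g).subtype g
      (Submodule.injective_subtype _) hg (LinearMap.exact_subtype_ker_map g)
    have hk : LinearMap.ker g ≤ LinearMap.range f := by
      intro y hy
      obtain ⟨y, rfl⟩ := Submodule.Quotient.mk_surjective _ y
      have hy : y ∈ I2 := by
        have : g (Submodule.Quotient.mk y) = 0 := hy
        exact (Submodule.Quotient.mk_eq_zero I2).mp this
      obtain ⟨j, hj, z, hz, rfl⟩ := Submodule.mem_sup.mp hy
      obtain ⟨w, rfl⟩ := Ideal.mem_span_singleton'.mp hz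
      refine ⟨Submodule.Quotient.mk w, ?_⟩
      simp only [f, Submodule.mapQ_apply, LinearMap.mulLeft_apply]
      rw [eq_comm, Submodule.Quotient.eq]
      have : j + w * x^a - x^a * w = j := by ring
      rw [this]
      exact Ideal.mem_sup_left hj
    have h3 : Module.length R (LinearMap.ker g) ≤ Module.length R (R ⧸ I1) :=
      (Module.length_le_of_injective _ (Submodule.inclusion_injective hk)).trans
        (Module.length_le_of_surjective f.rangeRestrict f.surjective_rangeRestrict)
    change Module.length R (R ⧸ I) ≤ _
    rw [hlen]
    push_cast
    rw [add_mul, one_mul, add_comm]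
    exact add_le_add ih h3

theorem aux_len_list {R : Type*} [CommRing R] (q : ℕ) (l : List R) (J : Ideal R) :
    Module.length R (R ⧸ (J ⊔ Ideal.span {y | ∃ x ∈ l, y = x ^ q})) ≤
      q ^ l.length * Module.length R (R ⧸ (J ⊔ Ideal.span {y | y ∈ l})) := by
  induction l generalizing J with
  | nil => simp [-Submodule.Quotient.subsingleton_iff]; exact le_of_eq (by congr! <;> simp)
  | cons x l ih =>
    have h1 : J ⊔ Ideal.span {y | ∃ z ∈ x :: l, y = z ^ q} =
      (J ⊔ Ideal.span {x ^ q}) ⊔ Ideal.span {y | ∃ x ∈ l, y = x ^ q} := by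
      rw [sup_assoc, ← Ideal.span_union]
      congr 2; ext y; simp
    have h2 : J ⊔ Ideal.span {y | y ∈ x :: l} = (J ⊔ Ideal.span {y | y ∈ l}) ⊔ Ideal.span {x} := by
      rw [sup_assoc, ← Ideal.span_union]
      congr 2; ext y; simp
    have h3 : (J ⊔ Ideal.span {x ^ q}) ⊔ Ideal.span {y | y ∈ l} = (J ⊔ Ideal.span {y | y ∈ l}) ⊔ Ideal.span {x ^ q} := by
      rw [sup_right_comm]
    rw [h1, h2]
    refine (ih _).trans ?_
    rw [h3, List.length_cons, pow_succ, mul_assoc]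
    gcongr
    exact aux_len_sup _ _ _

theorem aux_params {R : Type*} [CommRing R] [IsDomain R] [IsNoetherianRing R] [IsLocalRing R]
    (d : ℕ) (hd : ringKrullDim R = d) (c : R) (hc : c ≠ 0) (hcu : ¬ IsUnit c) :
    ∃ l : List R, l.length + 1 ≤ d ∧ (∀ x ∈ l, x ∈ IsLocalRing.maximalIdeal R) ∧
      Module.length R (R ⧸ (Ideal.span {c} ⊔ Ideal.span {y | y ∈ l})) ≠ ⊤ := by
  let I := Ideal.span {c}
  have hI : I ≠ ⊤ := by rwa [Ne, Ideal.span_singleton_eq_top]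
  have : Nontrivial (R ⧸ I) := Ideal.Quotient.nontrivial_iff.mpr hI
  have : IsLocalRing (R ⧸ I) := .of_surjective' (Ideal.Quotient.mk I) Ideal.Quotient.mk_surjective
  have hdim := ringKrullDim_quotient_succ_le_of_nonZeroDivisor (mem_nonZeroDivisors_of_ne_zero hc)
  obtain ⟨s, hs, hcard⟩ := (IsLocalRing.maximalIdeal (R ⧸ I)).exists_finset_card_eq_height_of_isNoetherianRing
  have hlift : ∀ y : R ⧸ I, ∃ x, Ideal.Quotient.mk I x = y := Ideal.Quotient.mk_surjective
  choose f hf using hlift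
  have hloc : IsLocalHom (Ideal.Quotient.mk I) := 
    IsLocalHom.of_surjective _ Ideal.Quotient.mk_surjective
  refine ⟨s.toList.map f, ?_, ?_, ?_⟩
  · rw [List.length_map, Finset.length_toList]
    rw [hd, ← IsLocalRing.maximalIdeal_height_eq_ringKrullDim, ← hcard] at hdim
    exact_mod_cast hdim
  · intro x hx
    obtain ⟨y, hy, rfl⟩ := List.mem_map.mp hx
    have hy : y ∈ IsLocalRing.maximalIdeal (R ⧸ I) := hs.1.2 (Ideal.subset_span (by simpa using hy))
    rw [IsLocalRing.mem_maximalIdeal, mem_nonunits_iff] at hy ⊢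
    intro hu
    apply hy
    rw [← hf y]
    exact hu.map _
  · set J := Ideal.span {c} ⊔ Ideal.span {y | y ∈ s.toList.map f} with hJ
    have hart : IsArtinianRing (R ⧸ J) := by
      have hmapJ : ∀ P : Ideal R, P.IsPrime → J ≤ P → P = IsLocalRing.maximalIdeal R := by
        intro P hP hJP
        have hIP : I ≤ P := le_sup_left.trans hJP
        let Q := P.map (Ideal.Quotient.mk I)
        have hPQ : Q.comap (Ideal.Quotient.mk I) = P := by
          rw [Ideal.comap_map_of_surjective _ Ideal.Quotient.mk_surjective]
          simpa [← RingHom.ker_eq_comap_bot] using hIP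
        have hQ : Q.IsPrime := Ideal.map_isPrime_of_surjective Ideal.Quotient.mk_surjective (by simpa using hIP)
        have hsQ : Ideal.span (s : Set (R ⧸ I)) ≤ Q := by
          rw [Ideal.span_le]
          intro y hy
          rw [← hf y]
          refine Ideal.mem_map_of_mem _ (hJP (Ideal.mem_sup_right (Ideal.subset_span ?_)))
          exact List.mem_map.mpr ⟨y, by simpa using hy, rfl⟩
        have := hs.2 ⟨hQ, hsQ⟩ (IsLocalRing.le_maximalIdeal hQ.ne_top)
        have hQe : Q = IsLocalRing.maximalIdeal (R ⧸ I) := le_antisymm (IsLocalRing.le_maximalIdeal hQ.ne_top) this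
        rw [← hPQ, hQe]
        exact ((IsLocalRing.local_hom_TFAE (Ideal.Quotient.mk I)).out 0 4).mp hloc
      rw [isArtinianRing_iff_krullDimLE_zero, Ring.krullDimLE_zero_iff]
      intro P hP
      have h1 := hmapJ (P.comap (Ideal.Quotient.mk J)) inferInstance (by
        intro x hx
        simp [Ideal.Quotient.eq_zero_iff_mem.mpr hx])
      have : (P.comap (Ideal.Quotient.mk J)).IsMaximal := h1 ▸ inferInstance
      rw [← Ideal.map_comap_of_surjective _ Ideal.Quotient.mk_surjective P]
      exact (Ideal.map_eq_top_or_isMaximal_of_surjective _ Ideal.Quotient.mk_surjective this).resolve_left (by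
        rw [Ideal.map_comap_of_surjective _ Ideal.Quotient.mk_surjective P]; exact hP.ne_top)
    rw [Module.length_eq_of_surjective (R := R ⧸ J) (S := R) (M := R ⧸ J) Ideal.Quotient.mk_surjective]
    exact Module.length_ne_top
section aux
variable {R : Type*} [CommRing R] [IsLocalRing R]

variable {k : Type*} [AddCommGroup k] [Module R k]

theorem aux_len_ker {A B : Type*} [AddCommGroup A] [AddCommGroup B] [Module R A] [Module R B]
    (f : A →ₗ[R] B) : Module.length R A ≤ Module.length R (LinearMap.ker f) + Module.length R B := by
  rw [Module.length_eq_add_of_exact (LinearMap.ker f).subtype f.rangeRestrict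
    (Submodule.injective_subtype _) f.surjective_rangeRestrict
    (by
      intro x
      simp [Subtype.ext_iff])]
  gcongr
  exact Module.length_le_of_injective _ (Submodule.injective_subtype _)

theorem aux_len_map {A B : Type*} [AddCommGroup A] [AddCommGroup B] [Module R A] [Module R B]
    (f : A →ₗ[R] B) (P : Submodule R A) : Module.length R (P.map f) ≤ Module.length R P := by
  rw [← LinearMap.range_domRestrict]
  exact Module.length_le_of_surjective _ (f.domRestrict P).surjective_rangeRestrict

theorem aux_len_mono {A : Type*} [AddCommGroup A] [Module R A]
    {P Q : Submodule R A} (h : P ≤ Q) : Module.length R P ≤ Module.length R Q :=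
  Module.length_le_of_injective _ (Submodule.inclusion_injective h)

/-- precomposition -/
def cPre {Y : Type*} [AddCommGroup Y] [Module R Y] {N N' : Type*} [AddCommGroup N] [AddCommGroup N']
    (h : N →+ N') : (N' →+ Y) →ₗ[R] (N →+ Y) where
  toFun θ := θ.comp h
  map_add' _ _ := rfl
  map_smul' _ _ := rfl

variable (R k) in
/-- semilinear maps to the residue field -/
def cH (q : ℕ) (N : Type*) [AddCommGroup N] [Module R N] : Submodule R (N →+ k) where
  carrier := {θ | ∀ (r : R) (x : N), θ (r ^ q • x) = r • θ x}
  add_mem' := by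
    intro a b ha hb r x
    simp only [Set.mem_ofPred_eq] at ha hb
    simp [ha, hb]
  zero_mem' := by intro r x; simp
  smul_mem' := by
    intro a b hb r x
    simp only [Set.mem_ofPred_eq] at hb
    simp only [AddMonoidHom.smul_apply, hb]
    rw [smul_comm]

variable (R k) in
/-- those killing the multiples of c -/
def cZ (q : ℕ) (c : R) (N : Type*) [AddCommGroup N] [Module R N] : Submodule R (N →+ k) where
  carrier := {θ | θ ∈ cH R k q N ∧ ∀ x : N, θ (c • x) = 0}
  add_mem' := by
    intro a b ha hb
    exact ⟨add_mem ha.1 hb.1, fun x => by simp [ha.2, hb.2]⟩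
  zero_mem' := ⟨zero_mem _, fun x => by simp⟩
  smul_mem' := by
    intro a b hb
    exact ⟨Submodule.smul_mem _ _ hb.1, fun x => by simp [hb.2]⟩

theorem cPre_cH {q : ℕ} {N N' : Type*} [AddCommGroup N] [Module R N] [AddCommGroup N'] [Module R N']
    (h : N →ₗ[R] N') {θ : N' →+ k} (hθ : θ ∈ cH R k q N') :
    cPre (R := R) h.toAddMonoidHom θ ∈ cH R k q N := by
  intro r x
  have := hθ r (h x)
  simpa [cPre] using this

theorem cPre_cZ {q : ℕ} {c : R} {N N' : Type*} [AddCommGroup N] [Module R N] [AddCommGroup N'] [Module R N']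
    (h : N →ₗ[R] N') {θ : N' →+ k} (hθ : θ ∈ cZ R k q c N') :
    cPre (R := R) h.toAddMonoidHom θ ∈ cZ R k q c N := by
  refine ⟨cPre_cH h hθ.1, fun x => ?_⟩
  have := hθ.2 (h x)
  simpa [cPre] using this

theorem cH_lift {q : ℕ} {N N' : Type*} [AddCommGroup N] [Module R N] [AddCommGroup N'] [Module R N']
    (h : N →ₗ[R] N') (hs : Function.Surjective h) {θ : N →+ k} (hθ : θ ∈ cH R k q N)
    (hk : ∀ x, h x = 0 → θ x = 0) :
    θ ∈ (cH R k q N').map (cPre (R := R) h.toAddMonoidHom) := by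
  let θ' : N' →+ k := AddMonoidHom.liftOfSurjective h.toAddMonoidHom hs
    ⟨θ, fun x hx => hk x hx⟩
  have hθ' : ∀ x, θ' (h x) = θ x := fun x =>
    AddMonoidHom.liftOfRightInverse_comp_apply h.toAddMonoidHom _ _ ⟨θ, fun x hx => hk x hx⟩ x
  refine ⟨θ', ?_, ?_⟩
  · intro r y
    obtain ⟨x, rfl⟩ := hs y
    rw [← map_smul, hθ', hθ', hθ]
  · ext x
    exact hθ' x

theorem cH_ses {q : ℕ} {N : Type*} [AddCommGroup N] [Module R N] (P : Submodule R N) :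
    Module.length R (cH R k q N) ≤ Module.length R (cH R k q P) + Module.length R (cH R k q (N ⧸ P)) := by
  let f : cH R k q N →ₗ[R] cH R k q P :=
    (cPre (R := R) P.subtype.toAddMonoidHom).restrict (fun θ hθ => cPre_cH P.subtype hθ)
  refine (aux_len_ker f).trans ?_
  rw [add_comm]
  gcongr
  have h1 : Module.length R (LinearMap.ker f) = Module.length R ((LinearMap.ker f).map (cH R k q N).subtype) :=
    ((LinearMap.ker f).equivMapOfInjective _ (Submodule.injective_subtype _)).length_eq
  rw [h1]
  refine le_trans (aux_len_mono ?_) (aux_len_map (cPre (R := R) P.mkQ.toAddMonoidHom) (cH R k q (N ⧸ P)))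
  rintro _ ⟨⟨θ, hθ⟩, hk, rfl⟩
  refine cH_lift P.mkQ P.mkQ_surjective hθ ?_
  intro x hx
  have hx : x ∈ P := by simpa using hx
  have h2 : f ⟨θ, hθ⟩ = 0 := hk
  have h3 := DFunLike.congr_fun (congrArg Subtype.val h2) ⟨x, hx⟩
  exact h3

theorem cH_simple [IsSimpleModule R k] {q : ℕ} {ι : Type*} [Fintype ι] (b : ι → R)
    (hb : ∀ y : R, ∃ r : ι → R, y - ∑ i, r i ^ q * b i ∈ IsLocalRing.maximalIdeal R)
    {N : Type*} [AddCommGroup N] [Module R N] [IsSimpleModule R N] :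
    Module.length R (cH R k q N) ≤ Fintype.card ι := by
  haveI : Nontrivial N := IsSimpleModule.nontrivial R N
  obtain ⟨x, hx⟩ := exists_ne (0 : N)
  have hsurj := IsSimpleModule.toSpanSingleton_surjective R hx
  have hmax := IsSimpleModule.ker_toSpanSingleton_isMaximal R hx
  have hann : ∀ a ∈ IsLocalRing.maximalIdeal R, a • x = 0 := by
    intro a ha
    rw [← IsLocalRing.eq_maximalIdeal hmax] at ha
    exact ha
  let f : cH R k q N →ₗ[R] (ι → k) :=
    { toFun := fun θ i => θ.1 (b i • x)
      map_add' := fun _ _ => rfl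
      map_smul' := fun _ _ => rfl }
  have hf : Function.Injective f := by
    rw [injective_iff_map_eq_zero]
    intro θ hθ
    ext y
    obtain ⟨a, rfl⟩ := hsurj y
    obtain ⟨r, h1⟩ := hb a
    have h2 := hann _ h1
    rw [sub_smul, sub_eq_zero] at h2
    have h3 : θ.1 (a • x) = 0 := by
      rw [h2, Finset.sum_smul, map_sum]
      refine Finset.sum_eq_zero fun i _ => ?_
      rw [mul_smul, θ.2]
      have := congrFun hθ i
      change θ.1 (b i • x) = 0 at this
      rw [this, smul_zero]
    simpa using h3
  refine (Module.length_le_of_injective f hf).trans ?_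
  rw [Module.length_pi_of_fintype]
  simp [Module.length_eq_one R k]

theorem cH_bound [IsSimpleModule R k] {q : ℕ} {ι : Type*} [Fintype ι] (b : ι → R)
    (hb : ∀ y : R, ∃ r : ι → R, y - ∑ i, r i ^ q * b i ∈ IsLocalRing.maximalIdeal R)
    {N : Type*} [AddCommGroup N] [Module R N] (hN : IsFiniteLength R N) :
    Module.length R (cH R k q N) ≤ Fintype.card ι * Module.length R N := by
  induction hN with
  | @of_subsingleton N _ _ _ =>
    have : Subsingleton (cH R k q N) := by
      refine ⟨fun a b => ?_⟩
      ext x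
      rw [Subsingleton.elim x 0, map_zero, map_zero]
    simp
  | @of_simple_quotient N _ _ P _ hP ih =>
    refine (cH_ses P).trans ?_
    rw [Module.length_eq_add_of_exact P.subtype P.mkQ (Submodule.injective_subtype _) P.mkQ_surjective
      (LinearMap.exact_subtype_mkQ P), mul_add]
    refine add_le_add ih ?_
    rw [Module.length_eq_one R (N ⧸ P), mul_one]
    exact cH_simple b hb

theorem cZ_R_bound [IsSimpleModule R k] {q : ℕ} {ι : Type*} [Fintype ι] (hkill : ∀ r ∈ IsLocalRing.maximalIdeal R, ∀ y : k, r • y = 0) (b : ι → R)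
    (hb : ∀ y : R, ∃ r : ι → R, y - ∑ i, r i ^ q * b i ∈ IsLocalRing.maximalIdeal R) (c : R) (l : List R)
    (hl : ∀ x ∈ l, x ∈ IsLocalRing.maximalIdeal R)
    (hfin : Module.length R (R ⧸ (Ideal.span {c} ⊔ Ideal.span {y | y ∈ l})) ≠ ⊤) :
    Module.length R (cZ R k q c R) ≤ Fintype.card ι *
      (q ^ l.length * Module.length R (R ⧸ (Ideal.span {c} ⊔ Ideal.span {y | y ∈ l}))) := by
  have h0 := aux_len_list q l (Ideal.span {c})
  set I := Ideal.span {c} ⊔ Ideal.span {y | ∃ x ∈ l, y = x ^ q} with hI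
  have hIfin : Module.length R (R ⧸ I) ≠ ⊤ := by
    refine ne_top_of_le_ne_top ?_ h0
    exact WithTop.mul_ne_top (by exact_mod_cast ENat.coe_ne_top (q ^ l.length)) hfin
  refine le_trans ?_ (mul_le_mul_right h0 _)
  refine le_trans ?_ (cH_bound (k := k) b hb (Module.length_ne_top_iff.mp hIfin))
  refine le_trans (aux_len_mono ?_) (aux_len_map (cPre (R := R) (Submodule.mkQ I).toAddMonoidHom) (cH R k q (R ⧸ I)))
  intro θ hθ
  refine cH_lift (Submodule.mkQ I) (Submodule.mkQ_surjective I) hθ.1 ?_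
  intro x hx
  have hx : x ∈ I := by
    rw [Submodule.mkQ_apply] at hx
    exact (Submodule.Quotient.mk_eq_zero I).mp hx
  obtain ⟨y, hy, z, hz, rfl⟩ := Submodule.mem_sup.mp hx
  obtain ⟨w, rfl⟩ := Ideal.mem_span_singleton.mp hy
  rw [map_add, show θ (c * w) = 0 from hθ.2 w, zero_add]
  refine Submodule.span_induction (p := fun z _ => ∀ t, θ (t * z) = 0) ?_ ?_ ?_ ?_ hz 1 |> fun h => by simpa using h
  · rintro _ ⟨x, hx, rfl⟩ t
    rw [mul_comm]
    have := hθ.1 x t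
    rw [smul_eq_mul] at this
    rw [this]
    exact hkill x (hl x hx) _
  · intro t; simp
  · intro x y _ _ h1 h2 t
    rw [mul_add, map_add, h1, h2, zero_add]
  · intro a x _ h1 t
    rw [smul_eq_mul, ← mul_assoc]
    exact h1 _

theorem aux_gen {N : Type*} [AddCommGroup N] [Module R N] {n : ℕ} (v : Fin n → N)
    (hv : Submodule.span R (Set.range v) = ⊤) (A : Submodule R (N →+ k)) (A0 : Submodule R (R →+ k))
    (h : ∀ θ ∈ A, ∀ x : N, cPre (R := R) (LinearMap.toSpanSingleton R N x).toAddMonoidHom θ ∈ A0) :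
    Module.length R A ≤ n * Module.length R A0 := by
  let f : A →ₗ[R] (Fin n → A0) := LinearMap.pi fun i =>
    (cPre (R := R) (LinearMap.toSpanSingleton R N (v i)).toAddMonoidHom).restrict
      (fun θ hθ => h θ hθ (v i))
  have hf : Function.Injective f := by
    rw [injective_iff_map_eq_zero]
    intro θ hθ
    ext y
    have hy : y ∈ Submodule.span R (Set.range v) := hv ▸ Submodule.mem_top
    obtain ⟨r, rfl⟩ := (Submodule.mem_span_range_iff_exists_fun R).mp hy
    rw [map_sum]
    refine Finset.sum_eq_zero fun i _ => ?_
    have := DFunLike.congr_fun (congrArg Subtype.val (congrFun hθ i)) (r i)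
    exact this
  refine (Module.length_le_of_injective f hf).trans ?_
  rw [Module.length_pi_of_fintype]
  simp

/-- the reduced family -/
def cT (π : R →ₗ[R] k) (D : Set (R →+ R)) (N : Type*) [AddCommGroup N] [Module R N] : Submodule R (N →+ k) :=
  Submodule.span R {θ | ∃ φ ∈ D, ∃ ρ : N →ₗ[R] R,
    θ = π.toAddMonoidHom.comp (φ.comp ρ.toAddMonoidHom)}

theorem cT_le {π : R →ₗ[R] k} {p e : ℕ} {D : Set (R →+ R)} (hD : ∀ φ ∈ D, IsCartierMap p R e φ)
    (N : Type*) [AddCommGroup N] [Module R N] : cT π D N ≤ cH R k (p ^ e) N := by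
  rw [cT, Submodule.span_le]
  rintro _ ⟨φ, hφ, ρ, rfl⟩ r x
  have := hD φ hφ r (ρ x)
  simp at this ⊢
  rw [this, ← smul_eq_mul, map_smul]

theorem cPre_cT {π : R →ₗ[R] k} {D : Set (R →+ R)} {N N' : Type*} [AddCommGroup N] [Module R N] [AddCommGroup N'] [Module R N']
    (h : N →ₗ[R] N') {θ : N' →+ k} (hθ : θ ∈ cT π D N') :
    cPre (R := R) h.toAddMonoidHom θ ∈ cT π D N := by
  have : cT π D N' ≤ (cT π D N).comap (cPre (R := R) h.toAddMonoidHom) := by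
    rw [cT, Submodule.span_le]
    rintro _ ⟨φ, hφ, ρ, rfl⟩
    exact Submodule.subset_span ⟨φ, hφ, ρ ∘ₗ h, rfl⟩
  exact this hθ

theorem cT_le_add {π : R →ₗ[R] k} {q : ℕ} {D : Set (R →+ R)} {N N' : Type*} [AddCommGroup N] [Module R N]
    [AddCommGroup N'] [Module R N'] (hD : cT π D N ≤ cH R k q N) (c : R) (α : N' →ₗ[R] N) (β : N →ₗ[R] N')
    (h : ∀ x, α (β x) = c • x) :
    Module.length R (cT π D N) ≤ Module.length R (cT π D N') + Module.length R (cZ R k q c N) := by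
  let f : cT π D N →ₗ[R] cT π D N' :=
    (cPre (R := R) α.toAddMonoidHom).restrict (fun θ hθ => cPre_cT α hθ)
  refine (aux_len_ker f).trans ?_
  rw [add_comm]
  gcongr
  have h1 : Module.length R (LinearMap.ker f) = Module.length R ((LinearMap.ker f).map (cT π D N).subtype) :=
    ((LinearMap.ker f).equivMapOfInjective _ (Submodule.injective_subtype _)).length_eq
  rw [h1]
  refine aux_len_mono ?_
  rintro _ ⟨⟨θ, hθ⟩, hk, rfl⟩
  refine ⟨hD hθ, fun x => ?_⟩
  have h2 : f ⟨θ, hθ⟩ = 0 := hk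
  have h3 := DFunLike.congr_fun (congrArg Subtype.val h2) (β x)
  rw [← h]
  exact h3

theorem cT_pi (π : R →ₗ[R] k) (D : Set (R →+ R)) (n : ℕ) :
    Module.length R (cT π D (Fin n → R)) = n * Module.length R (cT π D R) := by
  refine le_antisymm ?_ ?_
  · exact aux_gen (fun i => Pi.single i 1) (by
      rw [← (Pi.basisFun R (Fin n)).span_eq]; congr 2; ext i; simp) _ _
      (fun θ hθ x => cPre_cT _ hθ)
  · let f : (Fin n → cT π D R) →ₗ[R] cT π D (Fin n → R) :=
      LinearMap.lsum R (fun _ => cT π D R) R fun i =>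
        (cPre (R := R) (LinearMap.proj i : (Fin n → R) →ₗ[R] R).toAddMonoidHom).restrict
          (fun θ hθ => cPre_cT _ hθ)
    have hfa : ∀ t y, (f t).1 y = ∑ i, (t i).1 (y i) := by
      intro t y
      simp only [f, LinearMap.lsum_apply, LinearMap.coe_sum, Finset.sum_apply, LinearMap.comp_apply]
      rw [Submodule.coe_sum, AddMonoidHom.finsetSum_apply]
      rfl
    have hf : Function.Injective f := by
      rw [injective_iff_map_eq_zero]
      intro t ht
      ext i y
      have := hfa t (Pi.single i y)
      rw [ht, Finset.sum_eq_single i] at this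
      · simpa using this.symm
      · intro j _ hj
        simp [hj]
      · simp
    refine le_trans ?_ (Module.length_le_of_injective f hf)
    rw [Module.length_pi_of_fintype]
    simp

theorem aux_len_eq_of_ker {A B E : Type*} [AddCommGroup A] [AddCommGroup B] [AddCommGroup E] [Module R A]
    [Module R B] [Module R E] (f : A →ₗ[R] B) (g : A →ₗ[R] E) (P : Submodule R A)
    (h : ∀ x ∈ P, f x = 0 ↔ g x = 0) :
    Module.length R (P.map f) = Module.length R (P.map g) := by
  rw [← LinearMap.range_domRestrict, ← LinearMap.range_domRestrict]
  have hk : LinearMap.ker (f.domRestrict P) = LinearMap.ker (g.domRestrict P) := by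
    ext ⟨x, hx⟩
    simpa using h x hx
  exact ((f.domRestrict P).quotKerEquivRange.symm.trans
    ((Submodule.quotEquivOfEq _ _ hk).trans (g.domRestrict P).quotKerEquivRange)).length_eq

/-- reduction mod m -/
def cRed (π : R →ₗ[R] k) (X : Type*) [AddCommGroup X] : (X →+ R) →ₗ[R] (X →+ k) where
  toFun θ := π.toAddMonoidHom.comp θ
  map_add' a b := by ext; simp
  map_smul' r a := by
    ext x
    exact map_smul π r (a x)

theorem splitNum_eq (π : R →ₗ[R] k) (hπ : ∀ x, π x = 0 ↔ x ∈ IsLocalRing.maximalIdeal R) {X : Type*} [AddCommGroup X] (D : Set (X →+ R))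
    (hD : ∀ θ ∈ Submodule.span R D, θ ∈ D ∨ θ = 0) :
    splitNum R D = ((Module.length R ((Submodule.span R D).map (cRed π X)) : ℕ∞) : WithBot ℕ∞) := by
  rw [splitNum, moduleLength, ← Module.coe_length]
  congr 1
  refine aux_len_eq_of_ker _ _ _ ?_
  intro θ hθ
  have hred : cRed π X θ = 0 ↔ ∀ x, θ x ∈ IsLocalRing.maximalIdeal R := by
    rw [DFunLike.ext_iff]
    exact forall_congr' fun x => hπ (θ x)
  rw [hred, Submodule.mkQ_apply, Submodule.Quotient.mk_eq_zero]
  constructor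
  · intro h
    have : Submodule.span R { ϑ ∈ D | ∀ x, ϑ x ∈ IsLocalRing.maximalIdeal R } ≤ LinearMap.ker (cRed π X) := by
      rw [Submodule.span_le]
      rintro ϑ ⟨_, h2⟩
      rw [SetLike.mem_coe, LinearMap.mem_ker, DFunLike.ext_iff]
      exact fun x => (hπ (ϑ x)).mpr (h2 x)
    exact hred.mp (this h)
  · intro h
    rcases hD θ hθ with h1 | rfl
    · exact Submodule.subset_span ⟨h1, h⟩
    · exact zero_mem _

theorem splitNum_carrier (π : R →ₗ[R] k) (hπ : ∀ x, π x = 0 ↔ x ∈ IsLocalRing.maximalIdeal R) {p : ℕ} (C : CartierStructure p R R) (e : ℕ) (he : 1 ≤ e) :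
    splitNum R (C.carrier e) = ((Module.length R (cT π (C.carrier e) R) : ℕ∞) : WithBot ℕ∞) := by
  rw [splitNum_eq π hπ]
  · refine congrArg (fun S : Submodule R _ => ((Module.length R S : ℕ∞) : WithBot ℕ∞)) ?_
    rw [Submodule.map_span, cT]
    congr 1
    ext θ
    constructor
    · rintro ⟨φ, hφ, rfl⟩
      exact ⟨φ, hφ, LinearMap.id, rfl⟩
    · rintro ⟨φ, hφ, ρ, rfl⟩
      refine ⟨_, C.mul_mem e he (ρ 1) φ hφ, ?_⟩
      ext x
      have : ρ x = ρ 1 * x := by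
        rw [← mul_one x, ← smul_eq_mul x 1, map_smul]; simp [mul_comm]
      change π (φ (ρ 1 * x)) = π (φ (ρ x))
      rw [this]
  · intro θ hθ
    induction hθ using Submodule.span_induction with
    | mem x h => exact Or.inl h
    | zero => exact Or.inr rfl
    | add x y _ _ hx hy =>
      rcases hx with hx | rfl
      · rcases hy with hy | rfl
        · exact Or.inl (C.add_mem e he _ hx _ hy)
        · rw [add_zero]; exact Or.inl hx
      · rwa [zero_add]
    | smul a x _ hx =>
      rcases hx with hx | rfl
      · exact Or.inl (C.smul_mem e he a x hx)
      · exact Or.inr (smul_zero _)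

theorem splitNum_natFam (π : R →ₗ[R] k) (hπ : ∀ x, π x = 0 ↔ x ∈ IsLocalRing.maximalIdeal R) {p : ℕ} (C : CartierStructure p R R) (e : ℕ) (he : 1 ≤ e)
    (N : Type*) [AddCommGroup N] [Module R N] :
    splitNum R (natFam C.carrier N e) = ((Module.length R (cT π (C.carrier e) N) : ℕ∞) : WithBot ℕ∞) := by
  set G := { ϑ : N →+ R | ∃ φ ∈ C.carrier e, ∃ ρ : N →ₗ[R] R, ϑ = φ.comp ρ.toAddMonoidHom } with hG
  have hnat : natFam C.carrier N e = (AddSubgroup.closure G : Set (N →+ R)) := rfl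
  have hspan : Submodule.span R (natFam C.carrier N e) = Submodule.span R G := by
    rw [hnat]
    refine le_antisymm ?_ (Submodule.span_mono AddSubgroup.subset_closure)
    rw [Submodule.span_le]
    have : AddSubgroup.closure G ≤ (Submodule.span R G).toAddSubgroup := by
      rw [AddSubgroup.closure_le]
      exact Submodule.subset_span
    exact this
  rw [splitNum_eq π hπ]
  · refine congrArg (fun S : Submodule R _ => ((Module.length R S : ℕ∞) : WithBot ℕ∞)) ?_
    rw [hspan, Submodule.map_span, cT]
    congr 1
    ext θ
    constructor
    · rintro ⟨_, ⟨φ, hφ, ρ, rfl⟩, rfl⟩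
      exact ⟨φ, hφ, ρ, rfl⟩
    · rintro ⟨φ, hφ, ρ, rfl⟩
      exact ⟨_, ⟨φ, hφ, ρ, rfl⟩, rfl⟩
  · intro θ hθ
    left
    rw [hnat] at hθ ⊢
    induction hθ using Submodule.span_induction with
    | mem x h => exact h
    | zero => exact zero_mem (AddSubgroup.closure G)
    | add x y _ _ hx hy => exact add_mem (S := AddSubgroup (N →+ R)) hx hy
    | smul a x _ hx =>
      change x ∈ AddSubgroup.closure G at hx
      change a • x ∈ AddSubgroup.closure G
      induction hx using AddSubgroup.closure_induction with
      | mem x h =>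
        obtain ⟨φ, hφ, ρ, rfl⟩ := h
        exact AddSubgroup.subset_closure ⟨_, C.smul_mem e he a φ hφ, ρ, rfl⟩
      | zero => rw [smul_zero]; exact zero_mem _
      | add x y _ _ hx hy => 
        rw [smul_add]
        exact add_mem (hx (Submodule.subset_span ‹_›)) (hy (Submodule.subset_span ‹_›))
      | neg x _ hx =>
        rw [smul_neg]
        exact neg_mem (hx (Submodule.subset_span ‹_›))

end aux

theorem aux_frob (p : ℕ) (k : Type*) [Field k] [CharP k p] (hp : p.Prime) (rk : ℕ) (h0 : rk ≠ 0)
    (hrk : letI := frobModule p hp k; rk = Module.finrank k (FrobMod k)) (e : ℕ) :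
    ∃ (ι : Type) (_ : Fintype ι) (b : ι → k), Fintype.card ι = rk ^ e ∧
      ∀ y : k, ∃ r : ι → k, y = ∑ i, r i ^ p ^ e * b i := by
  letI := frobModule p hp k
  haveI : ExpChar k p := .prime hp
  have hrk' : rk = Module.finrank k (FrobMod k) := hrk
  haveI : Module.Finite k (FrobMod k) := Module.finite_of_finrank_pos (by omega)
  let B := Module.finBasis k (FrobMod k)
  have hB : ∀ y : k, ∃ r : Fin (Module.finrank k (FrobMod k)) → k, y = ∑ i, r i ^ p * (show k from B i) := by
    intro y
    refine ⟨B.repr y, ?_⟩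
    exact (B.sum_repr y).symm
  induction e with
  | zero => exact ⟨Unit, inferInstance, fun _ => 1, by simp, fun y => ⟨fun _ => y, by simp⟩⟩
  | succ e ih =>
    obtain ⟨ι, _, b, hc, hb⟩ := ih
    refine ⟨ι × Fin (Module.finrank k (FrobMod k)), inferInstance, 
      fun ij => (show k from B ij.2) ^ p ^ e * b ij.1, ?_, ?_⟩
    · rw [Fintype.card_prod, hc, Fintype.card_fin, ← hrk', pow_succ]
    · intro y
      obtain ⟨r, hr⟩ := hb y
      choose s hs using fun i => hB (r i)
      refine ⟨fun ij => s ij.1 ij.2, ?_⟩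
      rw [hr, Fintype.sum_prod_type]
      refine Finset.sum_congr rfl fun i _ => ?_
      rw [hs i, sum_pow_char_pow, Finset.sum_mul]
      refine Finset.sum_congr rfl fun j _ => ?_
      rw [mul_pow, ← pow_mul, ← pow_succ', mul_assoc]

theorem aux_cZ_bound (p : ℕ) (hp : p.Prime) (R : Type*) [CommRing R] [IsDomain R] [IsNoetherianRing R]
    [IsLocalRing R] (k : Type*) [AddCommGroup k] [Module R k] [IsSimpleModule R k]
    (hkill : ∀ r ∈ IsLocalRing.maximalIdeal R, ∀ y : k, r • y = 0)
    (d : ℕ) (hd : ringKrullDim R = d)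
    [CharP (IsLocalRing.ResidueField R) p]
    (rk : ℕ) (h0 : rk ≠ 0)
    (hrk : letI := frobModule p hp (IsLocalRing.ResidueField R)
      rk = Module.finrank (IsLocalRing.ResidueField R) (FrobMod (IsLocalRing.ResidueField R)))
    (c : R) (hc : c ≠ 0) :
    ∃ B : ℕ, ∀ e, ∃ z : ℕ, Module.length R (cZ R k (p ^ e) c R) = z ∧
      p ^ e * z ≤ B * (p ^ (e * d) * rk ^ e) := by
  by_cases hu : IsUnit c
  · refine ⟨0, fun e => ⟨0, ?_, by simp⟩⟩
    have : Subsingleton (cZ R k (p ^ e) c R) := by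
      refine ⟨fun a b => ?_⟩
      have key : ∀ a : cZ R k (p ^ e) c R, ∀ x, a.1 x = 0 := by
        intro a x
        obtain ⟨u, rfl⟩ := hu
        have := a.2.2 ((↑(u⁻¹) : R) * x)
        simpa using this
      ext x
      rw [key, key]
    simp
  · obtain ⟨l, hl, hlm, hfin⟩ := aux_params d hd c hc hu
    obtain ⟨B, hB⟩ := ENat.ne_top_iff_exists.mp hfin
    refine ⟨B, fun e => ?_⟩
    obtain ⟨ι, _, b, hcard, hb⟩ := aux_frob p (IsLocalRing.ResidueField R) hp rk h0 hrk e
    have hlift : ∀ y : IsLocalRing.ResidueField R, ∃ x, IsLocalRing.residue R x = y :=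
      IsLocalRing.residue_surjective
    choose L hL using hlift
    have hz := cZ_R_bound (k := k) (q := p ^ e) hkill (fun i => L (b i)) (by
      intro y
      obtain ⟨r, hr⟩ := hb (IsLocalRing.residue R y)
      refine ⟨fun i => L (r i), ?_⟩
      rw [← IsLocalRing.residue_eq_zero_iff]
      simp [hL, hr]) c l hlm hfin
    rw [← hB, hcard] at hz
    have hz' : Module.length R (cZ R k (p ^ e) c R) ≤ ((rk ^ e * ((p ^ e) ^ l.length * B) : ℕ) : ℕ∞) := by
      exact_mod_cast hz
    obtain ⟨z, hzz⟩ := ENat.ne_top_iff_exists.mp (ne_top_of_le_ne_top (ENat.coe_ne_top _) hz')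
    refine ⟨z, hzz.symm, ?_⟩
    rw [← hzz] at hz'
    have hz2 : z ≤ rk ^ e * ((p ^ e) ^ l.length * B) := by exact_mod_cast hz'
    have hpow : p ^ e * (p ^ e) ^ l.length ≤ p ^ (e * d) := by
      rw [← pow_succ', ← pow_mul]
      exact Nat.pow_le_pow_right hp.pos (Nat.mul_le_mul_left _ hl)
    calc p ^ e * z ≤ p ^ e * (rk ^ e * ((p ^ e) ^ l.length * B)) := Nat.mul_le_mul_left _ hz2
      _ = B * ((p ^ e * (p ^ e) ^ l.length) * rk ^ e) := by ring
      _ ≤ _ := by gcongr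

/-- **Generalization of a theorem of Tucker:** the normalized splitting numbers of `M^♮`
converge to `(rank M) · s(R, C)`. -/
theorem splittingRatio_natFam_eq_rank_mul_fSignature
    (p : ℕ) (hp : p.Prime) (R : Type*) [CommRing R] [IsDomain R] [IsNoetherianRing R]
    [IsLocalRing R] [CharP R p]
    (hFf : letI := frobModule p hp R; Module.Finite R (FrobMod R))
    (K : Type*) [Field K] [Algebra R K] [IsFractionRing R K]
    (C : CartierStructure p R R)
    (M : Type*) [AddCommGroup M] [Module R M] [Module.Finite R M]
    (g : ℕ) (hg : g = Module.finrank K (TensorProduct R K M))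
    (aR : ℕ → ℕ)
    (haR : ∀ e, 1 ≤ e → ((aR e : ℕ∞) : WithBot ℕ∞) = splitNum R (C.carrier e))
    (hex : ∃ e, 1 ≤ e ∧ aR e ≠ 0)
    (n₀ : ℕ) (hn₀pos : 0 < n₀)
    (hn₀dvd : ∀ e, 1 ≤ e → aR e ≠ 0 → n₀ ∣ e)
    (hn₀gcd : ∀ m : ℕ, (∀ e, 1 ≤ e → aR e ≠ 0 → m ∣ e) → m ∣ n₀)
    (d : ℕ) (hd : ringKrullDim R = d)
    [CharP (IsLocalRing.ResidueField R) p]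
    (rk : ℕ)
    (hrk : letI := frobModule p hp (IsLocalRing.ResidueField R)
      rk = Module.finrank (IsLocalRing.ResidueField R) (FrobMod (IsLocalRing.ResidueField R)))
    (s : ℝ)
    (hs : Filter.Tendsto
      (fun e : ℕ => (aR (n₀ * e) : ℝ) / ((p : ℝ) ^ (n₀ * e * d) * (rk : ℝ) ^ (n₀ * e)))
      Filter.atTop (nhds s)) :
    ∃ aM : ℕ → ℕ,
      (∀ e, 1 ≤ e → ((aM e : ℕ∞) : WithBot ℕ∞) = splitNum R (natFam C.carrier M e)) ∧
      Filter.Tendsto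
        (fun e : ℕ => (aM (n₀ * e) : ℝ) / ((p : ℝ) ^ (n₀ * e * d) * (rk : ℝ) ^ (n₀ * e)))
        Filter.atTop (nhds ((g : ℝ) * s)) := by
  classical
  let k := R ⧸ IsLocalRing.maximalIdeal R
  let π : R →ₗ[R] k := Submodule.mkQ (IsLocalRing.maximalIdeal R)
  have hπ : ∀ x, π x = 0 ↔ x ∈ IsLocalRing.maximalIdeal R := fun x =>
    Submodule.Quotient.mk_eq_zero (IsLocalRing.maximalIdeal R)
  have hkill : ∀ r ∈ IsLocalRing.maximalIdeal R, ∀ y : k, r • y = 0 := by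
    intro r hr y
    obtain ⟨a, rfl⟩ := Submodule.mkQ_surjective _ y
    change r • π a = 0
    rw [← map_smul, hπ]
    exact Ideal.mul_mem_right _ _ hr
  have : IsSimpleModule R k :=
    isSimpleModule_iff_quot_maximal.mpr ⟨_, inferInstance, ⟨LinearEquiv.refl _ _⟩⟩
  have hlat := aux_lattice R K M
  rw [← hg] at hlat
  obtain ⟨c, α, β, hc0, hαβ, hβα⟩ := hlat
  obtain ⟨n, v, hv⟩ := Module.Finite.exists_fin (R := R) (M := M)
  have hT : ∀ e, 1 ≤ e → Module.length R (cT π (C.carrier e) R) = aR e := by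
    intro e he
    have := haR e he
    rw [splitNum_carrier π hπ C e he] at this
    exact_mod_cast this.symm
  have hle : ∀ e, 1 ≤ e → Module.length R (cT π (C.carrier e) M) ≤ n * aR e := by
    intro e he
    rw [← hT e he]
    exact aux_gen v hv _ _ (fun θ hθ x => cPre_cT _ hθ)
  have haM : ∀ e, ∃ a : ℕ, 1 ≤ e → Module.length R (cT π (C.carrier e) M) = a := by
    intro e
    by_cases he : 1 ≤ e
    · obtain ⟨a, ha⟩ := ENat.ne_top_iff_exists.mp (ne_top_of_le_ne_top
        (by exact_mod_cast ENat.coe_ne_top (n * aR e)) (hle e he))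
      exact ⟨a, fun _ => ha.symm⟩
    · exact ⟨0, fun h => absurd h he⟩
  choose aM haM using haM
  refine ⟨aM, fun e he => by rw [splitNum_natFam π hπ C e he, haM e he], ?_⟩
  have hn0e : ∀ e, 1 ≤ e → 1 ≤ n₀ * e := fun e he => Nat.mul_pos hn₀pos he
  by_cases h0 : rk = 0
  · subst h0
    have hz : ∀ a : ℕ → ℕ, Filter.Tendsto
      (fun e : ℕ => (a (n₀ * e) : ℝ) / ((p : ℝ) ^ (n₀ * e * d) * ((0 : ℕ) : ℝ) ^ (n₀ * e)))
      Filter.atTop (nhds 0) := by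
      intro a
      refine tendsto_const_nhds.congr' ?_
      filter_upwards [Filter.eventually_ge_atTop 1] with e he
      have := hn0e e he
      rw [Nat.cast_zero, zero_pow (by omega), mul_zero, div_zero]
    rw [tendsto_nhds_unique hs (hz aR), mul_zero]
    exact hz aM
  · obtain ⟨B, hB⟩ := aux_cZ_bound p hp R k hkill d hd rk h0 hrk c hc0
    have hmain : ∀ e, 1 ≤ e → |(aM e : ℝ) - g * aR e| * (p : ℝ) ^ e ≤
        ((n + g) * B) * ((p : ℝ) ^ (e * d) * (rk : ℝ) ^ e) := by
      intro e he
      obtain ⟨z, hz, hzB⟩ := hB e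
      have hZM : Module.length R (cZ R k (p ^ e) c M) ≤ n * z := by
        rw [← hz]
        exact aux_gen v hv _ _ (fun θ hθ x => cPre_cZ _ hθ)
      have hZF : Module.length R (cZ R k (p ^ e) c (Fin g → R)) ≤ g * z := by
        rw [← hz]
        exact aux_gen (fun i => Pi.single i 1) (by
          rw [← (Pi.basisFun R (Fin g)).span_eq]; congr 2; ext i; simp) _ _
          (fun θ hθ x => cPre_cZ _ hθ)
      have h1 := (cT_le_add (π := π) (cT_le (C.cartier_mem e he) M) c α β hαβ).trans
        (add_le_add_right hZM _)
      have h2 := (cT_le_add (π := π) (cT_le (C.cartier_mem e he) (Fin g → R)) c β α hβα).trans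
        (add_le_add_right hZF _)
      rw [cT_pi, hT e he, haM e he] at h1 h2
      have h1' : aM e ≤ g * aR e + n * z := by exact_mod_cast h1
      have h2' : g * aR e ≤ aM e + g * z := by exact_mod_cast h2
      have h1r : (aM e : ℝ) ≤ g * aR e + n * z := by exact_mod_cast h1'
      have h2r : (g * aR e : ℝ) ≤ aM e + g * z := by exact_mod_cast h2'
      have hzr : (p : ℝ) ^ e * z ≤ B * ((p : ℝ) ^ (e * d) * (rk : ℝ) ^ e) := by exact_mod_cast hzB
      have hnz : (0 : ℝ) ≤ n * z := by positivity
      have hgz : (0 : ℝ) ≤ g * z := by positivity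
      have habs : |(aM e : ℝ) - g * aR e| ≤ (n + g) * z := by
        rw [abs_le]
        constructor <;> nlinarith
      calc |(aM e : ℝ) - g * aR e| * (p : ℝ) ^ e ≤ ((n + g) * z) * (p : ℝ) ^ e := by gcongr
        _ = (n + g) * ((p : ℝ) ^ e * z) := by ring
        _ ≤ (n + g) * (B * ((p : ℝ) ^ (e * d) * (rk : ℝ) ^ e)) := by gcongr
        _ = _ := by ring
    have hdiff : Filter.Tendsto
      (fun e : ℕ => (aM (n₀ * e) : ℝ) / ((p : ℝ) ^ (n₀ * e * d) * (rk : ℝ) ^ (n₀ * e)) -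
        g * ((aR (n₀ * e) : ℝ) / ((p : ℝ) ^ (n₀ * e * d) * (rk : ℝ) ^ (n₀ * e))))
      Filter.atTop (nhds 0) := by
      have hp1 : (1 : ℝ) < p := by exact_mod_cast hp.one_lt
      have hlim : Filter.Tendsto (fun e : ℕ => ((n + g : ℝ) * B) * ((p : ℝ)⁻¹) ^ e) Filter.atTop (nhds 0) := by
        have := (tendsto_pow_atTop_nhds_zero_of_lt_one (r := (p : ℝ)⁻¹) (by positivity)
          (inv_lt_one_of_one_lt₀ hp1)).const_mul ((n + g : ℝ) * B)
        simpa using this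
      have hlim2 := hlim.comp (Filter.tendsto_id.const_mul_atTop' hn₀pos : Filter.Tendsto (fun e : ℕ => n₀ * e) Filter.atTop Filter.atTop)
      refine squeeze_zero_norm' ?_ hlim2
      filter_upwards [Filter.eventually_ge_atTop 1] with e he
      have h := hmain _ (hn0e e he)
      simp only [Function.comp_apply]
      set E := n₀ * e
      have hrk0 : (0 : ℝ) < rk := by exact_mod_cast Nat.pos_of_ne_zero h0
      have hW : (0 : ℝ) < (p : ℝ) ^ (E * d) * (rk : ℝ) ^ E := by positivity
      have hP : (0 : ℝ) < (p : ℝ) ^ E := by positivity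
      rw [← mul_div_assoc, ← sub_div, Real.norm_eq_abs, abs_div, abs_of_pos hW, div_le_iff₀ hW, inv_pow,
        mul_right_comm, ← div_eq_mul_inv, le_div_iff₀ hP]
      exact h
    have := hdiff.add (hs.const_mul (g : ℝ))
    simpa using this
end

section
/- Fix a prime p. Let R be a noetherian F-finite commutative ring of characteristic p, S a commutative R-algebra with R → S injective and S finitely generated as an R-module, M a finitely generated R-module, and C a Cartier structure on M. Assume that the test module τ(M,C) exists, i.e. that the set of C-stable submodules N ⊆ M such that, for every associated prime η of M, there exists j ≥ 1 with (φ_1)_η∘⋯∘(φ_j)_η (H^0_η(M_η)) ⊆ H^0_η(N_η) for all φ_i ∈ C_{e_i} with e_i ≥ 1, has a least element with respect to inclusion; and assume analogously that the test module τ(f^!M, f*C) exists, as a least element among f*C-stable S-submodules of f^!M satisfying the analogous condition at every associated prime of the S-module f^!M. Then Tr_M(τ(f^!M, f*C)) = τ(M, C), where Tr_M : Hom_R(S,M) → M is evaluation at 1. In particular, if τ(M,C) = M then Tr_M is surjective. -/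
/-- Multiplication on the source: `(coextSMul s μ) x = μ (x * s)`. -/
def coextSMul {R S M : Type*} [CommRing R] [CommRing S] [Algebra R S]
    [AddCommGroup M] [Module R M] (s : S) (μ : S →ₗ[R] M) : S →ₗ[R] M where
  toFun x := μ (x * s)
  map_add' x y := by show μ ((x + y) * s) = μ (x * s) + μ (y * s); rw [add_mul, map_add]
  map_smul' r x := by show μ ((r • x) * s) = r • μ (x * s); rw [smul_mul_assoc, map_smul]

/-- The coextension-of-scalars module structure on `S →ₗ[R] M`: `(s • μ) x = μ (x * s)`. -/
instance coextModule {R S M : Type*} [CommRing R] [CommRing S] [Algebra R S]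
    [AddCommGroup M] [Module R M] : Module S (S →ₗ[R] M) where
  smul := coextSMul
  one_smul μ := by ext x; show μ (x * 1) = μ x; rw [mul_one]
  mul_smul s t μ := by ext x; show μ (x * (s * t)) = μ ((x * s) * t); rw [mul_assoc]
  smul_zero s := by ext x; show (0 : S →ₗ[R] M) (x * s) = 0; simp
  smul_add s μ ν := by
    ext x; show (μ + ν) (x * s) = μ (x * s) + ν (x * s); simp
  add_smul s t μ := by ext x; show μ (x * (s + t)) = μ (x * s) + μ (x * t); rw [mul_add, map_add]
  zero_smul μ := by ext x; show μ (x * 0) = 0; rw [mul_zero, map_zero]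

instance coextSMulComm {R S M : Type*} [CommRing R] [CommRing S] [Algebra R S]
    [AddCommGroup M] [Module R M] : SMulCommClass S S (S →ₗ[R] M) := by
  constructor
  intro s t μ
  ext x
  show μ ((x * s) * t) = μ ((x * t) * s)
  rw [mul_right_comm]

/-- Iterated composition `φ₀ ∘ (u^{p^{e₀}-1} • ·) ∘ φ₁ ∘ (u^{p^{e₁}-1} • ·) ∘ ⋯`,
implementing the composite of localized maps `(φ₀)_η ∘ ⋯ ∘ (φ_{j-1})_η` on `m/u`. -/
def cartierChain (p : ℕ) {A : Type*} [Monoid A] {X : Type*} [AddCommMonoid X]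
    [DistribMulAction A X] (u : A) : (j : ℕ) → (Fin j → ℕ) → (Fin j → X →+ X) → (X →+ X)
  | 0, _, _ => AddMonoidHom.id X
  | j + 1, ev, φ =>
      (((φ 0).comp (DistribMulAction.toAddMonoidHom X (u ^ (p ^ ev 0 - 1)))).comp
        (cartierChain p u j (fun i => ev i.succ) (fun i => φ i.succ)))

/-- The condition entering the definition of the test module, at an associated prime `η`:
there is `j ≥ 1` such that every `j`-fold composite of localized maps from `D` sends the
`η`-power-torsion `H⁰_η(X_η)` into `H⁰_η(N_η)`. -/
def testCondAt (p : ℕ) (A : Type*) [CommRing A] (X : Type*) [AddCommGroup X] [Module A X]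
    (D : ℕ → Set (X →+ X)) (N : Submodule A X) (η : Ideal A) (hη : η.IsPrime) : Prop :=
  haveI := hη
  ∃ j, 1 ≤ j ∧ ∀ (ev : Fin j → ℕ), (∀ i, 1 ≤ ev i) → ∀ (φ : Fin j → X →+ X),
    (∀ i, φ i ∈ D (ev i)) → ∀ (m : X) (u : η.primeCompl),
      (∃ k : ℕ, ∀ a ∈ η ^ k, algebraMap A (Localization η.primeCompl) a •
        (LocalizedModule.mk m u : LocalizedModule η.primeCompl X) = 0) →
      ((∃ k : ℕ, ∀ a ∈ η ^ k, algebraMap A (Localization η.primeCompl) a •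
          (LocalizedModule.mk (cartierChain p (u : A) j ev φ m) u :
            LocalizedModule η.primeCompl X) = 0) ∧
        ∃ n ∈ N, ∃ v : η.primeCompl,
          (LocalizedModule.mk (cartierChain p (u : A) j ev φ m) u :
            LocalizedModule η.primeCompl X) = LocalizedModule.mk n v)

/-- The collection of submodules entering the definition of the test module `τ(X, D)`:
`D`-stable submodules `N ⊆ X` satisfying the local condition at every associated prime. -/
def testSet (p : ℕ) (A : Type*) [CommRing A] (X : Type*) [AddCommGroup X] [Module A X]
    (D : ℕ → Set (X →+ X)) : Set (Submodule A X) :=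
  { N | (∀ e, 1 ≤ e → ∀ φ ∈ D e, ∀ x ∈ N, φ x ∈ N) ∧
      ∀ (η : Ideal A) (hη : IsAssociatedPrime η X), testCondAt p A X D N η hη.1 }

/-- The degree-`e` part of the Cartier structure `f^*C` on `f^!M = Hom_R(S,M)`:
maps of the form `Σᵢ φᵢ^! · sᵢ`, described pointwise by
`(Σᵢ φᵢ^! · sᵢ)(μ)(x) = Σᵢ φᵢ (μ (x^{p^e} * sᵢ))`. -/
def pushShriek (p : ℕ) (R S : Type*) [CommRing R] [CommRing S] [Algebra R S]
    (M : Type*) [AddCommGroup M] [Module R M] (D : ℕ → Set (M →+ M)) :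
    ℕ → Set ((S →ₗ[R] M) →+ (S →ₗ[R] M)) := fun e =>
  { ν | ∃ (k : ℕ) (φ : Fin k → M →+ M) (s : Fin k → S), (∀ i, φ i ∈ D e) ∧
      ∀ (μ : S →ₗ[R] M) (x : S), ν μ x = ∑ i, φ i (μ (x ^ p ^ e * s i)) }


/-- `j`-fold composites of elements of `D`. -/
def CComp {X : Type*} [AddCommGroup X] (D : ℕ → Set (X →+ X)) : ℕ → Set (X →+ X)
  | 0 => {AddMonoidHom.id X}
  | j + 1 => {χ | ∃ e, 1 ≤ e ∧ ∃ φ ∈ D e, ∃ ψ ∈ CComp D j, χ = φ.comp ψ}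

/-- local torsion -/
def LTor {A : Type*} [CommRing A] {X : Type*} [AddCommGroup X] [Module A X] (η : Ideal A)
    (m : X) : Prop := ∃ k : ℕ, ∀ a ∈ η ^ k, ∃ s, s ∉ η ∧ s • a • m = 0

section gen
variable {p : ℕ} {A : Type*} [CommRing A] {X : Type*} [AddCommGroup X] [Module A X]
  {D : ℕ → Set (X →+ X)}

theorem chain_mem (hmul : ∀ e, 1 ≤ e → ∀ (a : A), ∀ φ ∈ D e,
    φ.comp (DistribSMul.toAddMonoidHom X a) ∈ D e) (u : A) :
    ∀ (j : ℕ) (ev : Fin j → ℕ), (∀ i, 1 ≤ ev i) → ∀ (φ : Fin j → X →+ X),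
    (∀ i, φ i ∈ D (ev i)) → cartierChain p u j ev φ ∈ CComp D j := by
  intro j
  induction j with
  | zero => intro ev _ φ _; simp [cartierChain, CComp]
  | succ j ih =>
    intro ev hev φ hφ
    exact ⟨ev 0, hev 0, _, hmul _ (hev 0) _ _ (hφ 0), _,
      ih _ (fun i => hev i.succ) _ (fun i => hφ i.succ), rfl⟩

theorem exists_chain : ∀ (j : ℕ) (ψ : X →+ X), ψ ∈ CComp D j →
    ∃ ev : Fin j → ℕ, (∀ i, 1 ≤ ev i) ∧ ∃ φ : Fin j → X →+ X, (∀ i, φ i ∈ D (ev i)) ∧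
      cartierChain p (1 : A) j ev φ = ψ := by
  intro j
  induction j with
  | zero =>
    intro ψ hψ
    refine ⟨fun _ => 1, fun _ => le_rfl, fun _ => ψ, fun i => i.elim0, ?_⟩
    simp only [CComp, Set.mem_singleton_iff] at hψ
    rw [hψ]; rfl
  | succ j ih =>
    rintro _ ⟨e, he, φ, hφ, ψ, hψ, rfl⟩
    obtain ⟨ev, hev, f, hf, rfl⟩ := ih ψ hψ
    refine ⟨Fin.cons e ev, ?_, Fin.cons φ f, ?_, ?_⟩
    · intro i; refine Fin.cases ?_ ?_ i <;> simp [he, hev]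
    · intro i; refine Fin.cases ?_ ?_ i <;> simp [hφ, hf]
    · ext x; simp [cartierChain]

theorem LTor_iff (η : Ideal A) [η.IsPrime] (m : X) (u : η.primeCompl) :
    (∃ k : ℕ, ∀ a ∈ η ^ k, algebraMap A (Localization η.primeCompl) a •
        (LocalizedModule.mk m u : LocalizedModule η.primeCompl X) = 0) ↔ LTor η m := by
  unfold LTor
  refine exists_congr fun k => forall₂_congr fun a ha => ?_
  rw [algebraMap_smul, LocalizedModule.smul'_mk, ← LocalizedModule.zero_mk 1,
    LocalizedModule.mk_eq]
  constructor
  · rintro ⟨s, hs⟩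
    refine ⟨s, s.2, ?_⟩
    simpa [Submonoid.smul_def] using hs
  · rintro ⟨s, hs, h⟩
    refine ⟨⟨s, hs⟩, ?_⟩
    simpa [Submonoid.smul_def] using h

theorem memloc_iff (η : Ideal A) [hη : η.IsPrime] (N : Submodule A X) (m : X) (u : η.primeCompl) :
    (∃ n ∈ N, ∃ v : η.primeCompl,
          (LocalizedModule.mk m u : LocalizedModule η.primeCompl X) = LocalizedModule.mk n v) ↔
      ∃ s, s ∉ η ∧ s • m ∈ N := by
  constructor
  · rintro ⟨n, hn, v, h⟩
    obtain ⟨w, hw⟩ := LocalizedModule.mk_eq.mp h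
    refine ⟨w * v, (w * v).2, ?_⟩
    rw [mul_smul]
    simp only [Submonoid.smul_def] at hw
    rw [hw]
    exact N.smul_mem _ (N.smul_mem _ hn)
  · rintro ⟨s, hs, h⟩
    refine ⟨s • m, h, ⟨s, hs⟩ * u, ?_⟩
    rw [LocalizedModule.mk_eq]
    refine ⟨1, ?_⟩
    simp only [Submonoid.smul_def, one_smul, Submonoid.coe_mul]
    rw [mul_comm, mul_smul]

theorem CComp_semi (hp : p.Prime) (hsl : ∀ e, 1 ≤ e → ∀ φ ∈ D e, IsCartierMap p A e φ) :
    ∀ (j : ℕ) (ψ : X →+ X), ψ ∈ CComp D j →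
    ∃ q, 1 ≤ q ∧ j ≤ q ∧ ∀ (a : A) (x : X), ψ (a ^ q • x) = a • ψ x := by
  have key : ∀ (j : ℕ) (ψ : X →+ X), ψ ∈ CComp D j →
    ∃ e, j ≤ e ∧ ∀ (a : A) (x : X), ψ (a ^ p ^ e • x) = a • ψ x := by
    intro j
    induction j with
    | zero =>
      intro ψ hψ
      simp only [CComp, Set.mem_singleton_iff] at hψ
      subst hψ
      exact ⟨0, le_rfl, by simp⟩
    | succ j ih =>
      rintro _ ⟨e, he, φ, hφ, ψ, hψ, rfl⟩
      obtain ⟨d, hd, h⟩ := ih ψ hψ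
      refine ⟨e + d, by omega, fun a x => ?_⟩
      simp only [AddMonoidHom.comp_apply]
      rw [pow_add, pow_mul, h, hsl e he φ hφ]
  intro j ψ hψ
  obtain ⟨e, he, h⟩ := key j ψ hψ
  exact ⟨p ^ e, Nat.one_le_pow _ _ hp.pos, he.trans (Nat.lt_pow_self hp.one_lt).le, h⟩

theorem LTor_map {η : Ideal A} [hη : η.IsPrime] {ψ : X →+ X} {q : ℕ} (hq : 1 ≤ q)
    (h : ∀ (a : A) (x : X), ψ (a ^ q • x) = a • ψ x) {m : X} (hm : LTor η m) :
    LTor η (ψ m) := by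
  obtain ⟨k, hk⟩ := hm
  refine ⟨k, fun a ha => ?_⟩
  obtain ⟨s, hs, h0⟩ := hk a ha
  refine ⟨s, hs, ?_⟩
  rw [← mul_smul, ← h, mul_pow]
  obtain ⟨q, rfl⟩ : ∃ q', q = q' + 1 := ⟨q - 1, by omega⟩
  rw [pow_succ, pow_succ, show s ^ q * s * (a ^ q * a) = (s ^ q * a ^ q) * (s * a) by ring,
    mul_smul, mul_smul s, h0, smul_zero, map_zero]

theorem LTor_smul {η : Ideal A} {m : X} (hm : LTor η m) (b : A) : LTor η (b • m) := by
  obtain ⟨k, hk⟩ := hm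
  refine ⟨k, fun a ha => ?_⟩
  obtain ⟨s, hs, h0⟩ := hk a ha
  exact ⟨s, hs, by rw [smul_comm a, smul_comm s, h0, smul_zero]⟩

theorem testCondAt_iff (hp : p.Prime) (hsl : ∀ e, 1 ≤ e → ∀ φ ∈ D e, IsCartierMap p A e φ)
    (hmul : ∀ e, 1 ≤ e → ∀ (a : A), ∀ φ ∈ D e,
    φ.comp (DistribSMul.toAddMonoidHom X a) ∈ D e) (N : Submodule A X) (η : Ideal A)
    (hη : η.IsPrime) : testCondAt p A X D N η hη ↔ ∃ j, 1 ≤ j ∧ ∀ ψ ∈ CComp D j, ∀ m,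
      LTor η m → ∃ s, s ∉ η ∧ s • ψ m ∈ N := by
  unfold testCondAt
  simp only [LTor_iff, memloc_iff]
  refine exists_congr fun j => and_congr_right fun hj => ?_
  constructor
  · intro H ψ hψ m hm
    obtain ⟨ev, hev, φ, hφ, rfl⟩ := exists_chain (p := p) (A := A) j ψ hψ
    exact (H ev hev φ hφ m 1 hm).2
  · intro H ev hev φ hφ m u hm
    have hc := chain_mem (p := p) hmul (u : A) j ev hev φ hφ
    obtain ⟨q, hq, -, h⟩ := CComp_semi hp hsl _ _ hc
    exact ⟨LTor_map hq h hm, H _ hc m hm⟩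

theorem CComp_split : ∀ (i j : ℕ) (χ : X →+ X), χ ∈ CComp D (i + j) →
    ∃ φ ∈ CComp D i, ∃ ψ ∈ CComp D j, χ = φ.comp ψ := by
  intro i j
  induction i with
  | zero => intro χ h; rw [zero_add] at h; exact ⟨_, rfl, χ, h, rfl⟩
  | succ i ih =>
    intro χ h
    rw [show i + 1 + j = (i + j) + 1 by ring] at h
    obtain ⟨e, he, φ, hφ, ψ, hψ, rfl⟩ := h
    obtain ⟨f, hf, g, hg, rfl⟩ := ih ψ hψ
    exact ⟨_, ⟨e, he, φ, hφ, f, hf, rfl⟩, g, hg, rfl⟩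

theorem CComp_stable {N : Submodule A X} (hN : ∀ e, 1 ≤ e → ∀ φ ∈ D e, ∀ x ∈ N, φ x ∈ N) :
    ∀ (j : ℕ) (ψ : X →+ X), ψ ∈ CComp D j → ∀ x ∈ N, ψ x ∈ N := by
  intro j
  induction j with
  | zero => rintro _ rfl x hx; exact hx
  | succ j ih =>
    rintro _ ⟨e, he, φ, hφ, ψ, hψ, rfl⟩ x hx
    exact hN e he φ hφ _ (ih ψ hψ x hx)

theorem cond_mono (hp : p.Prime) (hsl : ∀ e, 1 ≤ e → ∀ φ ∈ D e, IsCartierMap p A e φ)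
    {N : Submodule A X} (hN : ∀ e, 1 ≤ e → ∀ φ ∈ D e, ∀ x ∈ N, φ x ∈ N) {η : Ideal A}
    {j j' : ℕ} (hj : j ≤ j') (H : ∀ ψ ∈ CComp D j, ∀ m, LTor η m → ∃ s, s ∉ η ∧ s • ψ m ∈ N) :
    ∀ ψ ∈ CComp D j', ∀ m, LTor η m → ∃ s, s ∉ η ∧ s • ψ m ∈ N := by
  intro χ hχ m hm
  obtain ⟨i, rfl⟩ : ∃ i, j' = i + j := ⟨j' - j, by omega⟩
  obtain ⟨φ, hφ, ψ, hψ, rfl⟩ := CComp_split _ _ _ hχ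
  obtain ⟨s, hs, h⟩ := H ψ hψ m hm
  obtain ⟨q, hq, -, hq'⟩ := CComp_semi hp hsl _ _ hφ
  refine ⟨s, hs, ?_⟩
  rw [AddMonoidHom.comp_apply, ← hq']
  obtain ⟨q, rfl⟩ : ∃ q', q = q' + 1 := ⟨q - 1, by omega⟩
  rw [pow_succ, mul_smul]
  exact CComp_stable hN _ _ hφ _ (N.smul_mem _ h)

end gen

theorem exists_functional (A B : Type*) [CommRing A] [IsDomain A] [CommRing B] [IsDomain B]
    [Algebra A B] [Module.Finite A B] (hinj : Function.Injective (algebraMap A B)) :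
    ∃ f : B →ₗ[A] A, f 1 ≠ 0 := by
  haveI : FaithfulSMul A B := (faithfulSMul_iff_algebraMap_injective A B).mpr hinj
  let K := FractionRing A
  let L := FractionRing B
  letI : Algebra K L := FractionRing.liftAlgebra A L
  haveI : IsScalarTower A K L := FractionRing.isScalarTower_liftAlgebra A L
  obtain ⟨l, hl⟩ := Module.Projective.exists_dual_eq_one K (one_ne_zero : (1 : L) ≠ 0)
  let g : B →ₗ[A] K := (l.restrictScalars A).comp (IsScalarTower.toAlgHom A B L).toLinearMap
  have hg : g 1 = 1 := by simp [g, hl]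
  obtain ⟨t, ht⟩ := Module.Finite.fg_top (R := A) (M := B)
  obtain ⟨b, hb⟩ := IsLocalization.exist_integer_multiples (nonZeroDivisors A) t g
  have hr : ∀ x : B, ((b : A) • g) x ∈ LinearMap.range (Algebra.linearMap A K) := by
    intro x
    have hx : x ∈ Submodule.span A (t : Set B) := by rw [ht]; trivial
    induction hx using Submodule.span_induction with
    | mem x hx =>
      obtain ⟨y, hy⟩ := hb x hx
      exact ⟨y, hy⟩
    | zero => simp
    | add x y _ _ hx hy => rw [map_add]; exact add_mem hx hy
    | smul a x _ hx => rw [map_smul]; exact Submodule.smul_mem _ _ hx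
  have hi : Function.Injective (Algebra.linearMap A K) := IsFractionRing.injective A K
  let e := LinearEquiv.ofInjective _ hi
  refine ⟨e.symm.toLinearMap.comp (LinearMap.codRestrict _ ((b : A) • g) hr), ?_⟩
  intro h
  simp only [LinearMap.comp_apply, LinearEquiv.coe_coe, LinearEquiv.map_eq_zero_iff] at h
  have := congrArg Subtype.val h
  simp only [LinearMap.codRestrict_apply, LinearMap.smul_apply, hg, ZeroMemClass.coe_zero,
    Algebra.smul_def, mul_one] at this
  exact nonZeroDivisors.ne_zero b.2 (hi (by simpa using this))

section push
variable {p : ℕ} {R S : Type*} [CommRing R] [CommRing S] [Algebra R S]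
    {M : Type*} [AddCommGroup M] [Module R M]

theorem coext_apply (s : S) (μ : S →ₗ[R] M) (x : S) : (s • μ) x = μ (x * s) := rfl

theorem coext_alg (r : R) (μ : S →ₗ[R] M) (x : S) : (algebraMap R S r • μ) x = r • μ x := by
  rw [coext_apply, mul_comm, ← Algebra.smul_def, map_smul]

theorem push_semi (D : ℕ → Set (M →+ M)) : ∀ e, 1 ≤ e → ∀ ν ∈ pushShriek p R S M D e,
    IsCartierMap p S e ν := by
  rintro e he ν ⟨k, φ, s, hφ, h⟩ a μ
  ext x
  rw [h, coext_apply, h]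
  refine Finset.sum_congr rfl fun i _ => ?_
  rw [coext_apply]
  congr 2
  ring

theorem push_mul (D : ℕ → Set (M →+ M)) : ∀ e, 1 ≤ e → ∀ (a : S), ∀ ν ∈ pushShriek p R S M D e,
    ν.comp (DistribSMul.toAddMonoidHom _ a) ∈ pushShriek p R S M D e := by
  rintro e he a ν ⟨k, φ, s, hφ, h⟩
  refine ⟨k, φ, fun i => s i * a, hφ, fun μ x => ?_⟩
  rw [AddMonoidHom.comp_apply, h]
  refine Finset.sum_congr rfl fun i _ => ?_
  rw [DistribSMul.toAddMonoidHom_apply, coext_apply, mul_assoc]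

theorem push_comp (D : ℕ → Set (M →+ M)) (μ : S →ₗ[R] M) : ∀ (j : ℕ) (χ : _),
    χ ∈ CComp (pushShriek p R S M D) j → ∀ (T : AddSubgroup M),
    (∀ φ ∈ CComp D j, ∀ y, φ (μ y) ∈ T) → ∀ x, χ μ x ∈ T := by
  intro j
  induction j with
  | zero =>
    rintro _ rfl T hT x
    exact hT _ rfl x
  | succ j ih =>
    rintro _ ⟨e, he, ν, ⟨k, φ, s, hφ, h⟩, χ, hχ, rfl⟩ T hT x
    rw [AddMonoidHom.comp_apply, h]
    refine sum_mem fun i _ => ?_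
    refine ih χ hχ (T.comap (φ i)) (fun ψ hψ y => ?_) _
    exact hT _ ⟨e, he, φ i, hφ i, ψ, hψ, rfl⟩ y

/-- The map `φ^!`. -/
def shriek [CharP S p] (hp : p.Prime) (e : ℕ) (φ : M →+ M) (h : IsCartierMap p R e φ) :
    (S →ₗ[R] M) →+ (S →ₗ[R] M) where
  toFun μ :=
    { toFun := fun x => φ (μ (x ^ p ^ e))
      map_add' := fun x y => by
        haveI : Fact p.Prime := ⟨hp⟩
        rw [add_pow_char_pow, map_add, map_add]
      map_smul' := fun r x => by
        rw [smul_pow, map_smul, h]; rfl }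
  map_zero' := by ext; simp
  map_add' μ ν := by ext; simp

theorem shriek_mem [CharP S p] (hp : p.Prime) (D : ℕ → Set (M →+ M)) (e : ℕ) (φ : M →+ M)
    (h : IsCartierMap p R e φ) (hφ : φ ∈ D e) :
    shriek hp e φ h ∈ pushShriek p R S M D e :=
  ⟨1, fun _ => φ, fun _ => 1, fun _ => hφ, fun μ x => by simp [shriek]⟩

theorem lift_comp [CharP S p] (hp : p.Prime) (D : ℕ → Set (M →+ M))
    (hsl : ∀ e, 1 ≤ e → ∀ φ ∈ D e, IsCartierMap p R e φ) : ∀ (j : ℕ) (ψ : M →+ M),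
    ψ ∈ CComp D j → ∃ χ ∈ CComp (pushShriek p R S M D) j, ∀ μ, χ μ 1 = ψ (μ 1) := by
  intro j
  induction j with
  | zero => rintro _ rfl; exact ⟨_, rfl, fun _ => rfl⟩
  | succ j ih =>
    rintro _ ⟨e, he, φ, hφ, ψ, hψ, rfl⟩
    obtain ⟨χ, hχ, h⟩ := ih ψ hψ
    refine ⟨_, ⟨e, he, _, shriek_mem hp D e φ (hsl e he φ hφ) hφ, χ, hχ, rfl⟩, fun μ => ?_⟩
    simp [shriek, h]

/-- A common multiplier for finitely generated data. -/
theorem common_mult {η : Ideal R} [hη : η.IsPrime] {X : Type*} [AddCommGroup X] [Module R X]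
    [Module.Finite R X] (N : Submodule R M) (f : X →ₗ[R] M)
    (h : ∀ x, ∃ s, s ∉ η ∧ s • f x ∈ N) : ∃ s, s ∉ η ∧ ∀ x, s • f x ∈ N := by
  classical
  obtain ⟨t, ht⟩ := Module.Finite.fg_top (R := R) (M := X)
  choose s hs hN using h
  refine ⟨∏ x ∈ t, s x, ?_, fun x => ?_⟩
  · rw [Ideal.IsPrime.prod_mem_iff]
    rintro ⟨x, -, hx⟩
    exact hs x hx
  have hx : x ∈ Submodule.span R (t : Set X) := by rw [ht]; trivial
  induction hx using Submodule.span_induction with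
  | mem x hx =>
    rw [← Finset.mul_prod_erase t s hx, mul_comm, mul_smul]
    exact N.smul_mem _ (hN x)
  | zero => simp
  | add x y _ _ hx hy => rw [map_add, smul_add]; exact add_mem hx hy
  | smul a x _ hx => rw [map_smul, smul_comm]; exact Submodule.smul_mem _ _ hx

/-- local membership subgroup -/
def locSub (η : Ideal R) (hη : η.IsPrime) (N : Submodule R M) : AddSubgroup M where
  carrier := {m | ∃ s, s ∉ η ∧ s • m ∈ N}
  zero_mem' := ⟨1, fun h => hη.ne_top ((Ideal.eq_top_iff_one _).mpr h), by simp⟩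
  add_mem' := by
    rintro a b ⟨s, hs, ha⟩ ⟨t, ht, hb⟩
    refine ⟨s * t, fun h => (hη.mem_or_mem h).elim hs ht, ?_⟩
    rw [smul_add]
    refine add_mem ?_ ?_
    · rw [mul_comm, mul_smul]; exact N.smul_mem _ ha
    · rw [mul_smul]; exact N.smul_mem _ hb
  neg_mem' := by
    rintro a ⟨s, hs, ha⟩
    exact ⟨s, hs, by rw [smul_neg]; exact neg_mem ha⟩

/-- maps with values in `N` -/
def homInto (S : Type*) [CommRing S] [Algebra R S] (N : Submodule R M) :
    Submodule S (S →ₗ[R] M) where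
  carrier := {μ | ∀ x, μ x ∈ N}
  zero_mem' := fun x => by simp
  add_mem' := fun {a b} ha hb x => by
    rw [LinearMap.add_apply]; exact add_mem (ha x) (hb x)
  smul_mem' := fun s μ h x => h _

theorem assoc_comap [IsNoetherianRing S] [IsNoetherianRing R] [Module.Finite R S] {Q : Ideal S}
    (hQ : IsAssociatedPrime Q (S →ₗ[R] M)) :
    IsAssociatedPrime (Q.comap (algebraMap R S)) M := by
  classical
  obtain ⟨hP, μ, hμ⟩ := isAssociatedPrime_iff.mp hQ
  have hP' : (Q.comap (algebraMap R S)).IsPrime := Ideal.comap_isPrime _ _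
  obtain ⟨t, ht⟩ := Module.Finite.fg_top (R := R) (M := S)
  have hmem : ∀ r : R, r ∈ Q.comap (algebraMap R S) ↔ ∀ x, r • μ x = 0 := by
    intro r
    rw [Ideal.mem_comap, hμ, Submodule.mem_colon_singleton, Submodule.mem_bot]
    constructor
    · intro h x; rw [← coext_alg, h]; rfl
    · intro h; ext x; rw [coext_alg, h]; rfl
  by_contra hcon
  have : ∀ x, ∃ r, r • μ x = 0 ∧ r ∉ Q.comap (algebraMap R S) := by
    intro x
    by_contra! hx
    apply hcon
    rw [isAssociatedPrime_iff]
    refine ⟨hP', μ x, ?_⟩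
    ext r
    rw [Submodule.mem_colon_singleton, Submodule.mem_bot]
    exact ⟨fun h => (hmem r).mp h x, hx r⟩
  obtain ⟨s, hs, h⟩ := common_mult (η := Q.comap (algebraMap R S)) (⊥ : Submodule R M) μ
    (fun x => by obtain ⟨r, h1, h2⟩ := this x; exact ⟨r, h2, by simpa using h1⟩)
  exact hs ((hmem s).mpr fun x => by simpa using h x)

theorem homInto_mem (hp : p.Prime) [IsNoetherianRing S] [IsNoetherianRing R] [Module.Finite R S]
    (C : CartierStructure p R M) (N : Submodule R M) (hN : N ∈ testSet p R M C.carrier) :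
    homInto S N ∈ testSet p S (S →ₗ[R] M) (pushShriek p R S M C.carrier) := by
  refine ⟨?_, fun Q hQ => ?_⟩
  · rintro e he ν ⟨k, φ, s, hφ, h⟩ μ hμ x
    rw [h]
    exact sum_mem fun i _ => hN.1 e he _ (hφ i) _ (hμ _)
  · rw [testCondAt_iff hp (push_semi _) (push_mul _)]
    have hη := assoc_comap hQ
    have hc := hN.2 _ hη
    rw [testCondAt_iff hp C.cartier_mem C.mul_mem] at hc
    obtain ⟨j, hj, H⟩ := hc
    refine ⟨j, hj, fun χ hχ μ hμ => ?_⟩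
    set η := Q.comap (algebraMap R S) with hηd
    haveI : η.IsPrime := hη.1
    haveI hQp : Q.IsPrime := hQ.1
    obtain ⟨q, hq, -, hsl⟩ := CComp_semi hp (push_semi _) _ _ hχ
    -- uniform torsion
    obtain ⟨k, hk⟩ := hμ
    obtain ⟨s, hs, h0⟩ : ∃ s, s ∉ Q ∧ ∀ a ∈ Q ^ k, s • a • μ = 0 := by
      obtain ⟨s, hs, h⟩ := common_mult (R := S) (η := Q) (⊥ : Submodule S (S →ₗ[R] M))
        ((LinearMap.toSpanSingleton S _ μ).comp (Q ^ k).subtype)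
        (fun x => by obtain ⟨s, h1, h2⟩ := hk x.1 x.2; exact ⟨s, h1, by simpa using h2⟩)
      exact ⟨s, hs, fun a ha => by simpa using h ⟨a, ha⟩⟩
    have hT : ∀ x, χ (s ^ q • μ) x ∈ locSub η inferInstance N := by
      refine push_comp _ _ j χ hχ _ fun φ hφ y => H φ hφ _ ⟨k, fun a ha => ⟨1, ?_, ?_⟩⟩
      · exact fun h => (inferInstance : η.IsPrime).ne_top ((Ideal.eq_top_iff_one _).mpr h)
      · rw [one_smul, ← coext_alg]
        have ha' : algebraMap R S a ∈ Q ^ k := by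
          have : η.map (algebraMap R S) ≤ Q := Ideal.map_comap_le
          exact Ideal.pow_right_mono this k (by
            rw [← Ideal.map_pow]; exact Ideal.mem_map_of_mem _ ha)
        obtain ⟨q, rfl⟩ : ∃ q', q = q' + 1 := ⟨q - 1, by omega⟩
        rw [pow_succ, mul_smul, smul_comm _ (s ^ q), smul_comm _ s, h0 _ ha', smul_zero]
        rfl
    obtain ⟨t, ht, h⟩ := common_mult (η := η) N (χ (s ^ q • μ)) hT
    refine ⟨algebraMap R S t * s, fun h => (hQp.mem_or_mem h).elim ht hs, fun x => ?_⟩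
    rw [mul_smul, coext_alg, ← hsl]
    exact h x

end push

section partA
variable {p : ℕ} {R S : Type*} [CommRing R] [CommRing S] [Algebra R S]
    {M : Type*} [AddCommGroup M] [Module R M]

theorem one_notMem' {A : Type*} [CommRing A] {η : Ideal A} (hη : η.IsPrime) : (1 : A) ∉ η :=
  fun h => hη.ne_top ((Ideal.eq_top_iff_one _).mpr h)

theorem exists_hom [Module.Finite R S] (hinj : Function.Injective (algebraMap R S))
    (η : Ideal R) [hη : η.IsPrime] (m : M) (hm : ∀ a ∈ η, a • m = 0) :
    ∃ μ : S →ₗ[R] M, (∀ a ∈ η, algebraMap R S a • μ = 0) ∧ ∃ r, r ∉ η ∧ μ 1 = r • m := by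
  obtain ⟨Q, -, hQ, hQη⟩ := Ideal.exists_ideal_over_prime_of_isIntegral (S := S) η ⊥ (by
    intro x hx
    have : x = 0 := hinj (by simpa using hx)
    rw [this]; exact η.zero_mem)
  haveI : Q.LiesOver η := ⟨hQη.symm⟩
  haveI : Module.Finite (R ⧸ η) (S ⧸ Q) := Module.Finite.of_restrictScalars_finite R _ _
  obtain ⟨f, hf⟩ := exists_functional (R ⧸ η) (S ⧸ Q) (FaithfulSMul.algebraMap_injective _ _)
  let g : (R ⧸ η) →ₗ[R] M := Submodule.liftQ η (LinearMap.toSpanSingleton R M m) (by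
    intro a ha; simpa using hm a ha)
  let μ : S →ₗ[R] M := g.comp ((f.restrictScalars R).comp (IsScalarTower.toAlgHom R S (S ⧸ Q)).toLinearMap)
  have hg : ∀ r : R, g (Ideal.Quotient.mk η r) = r • m := fun r => by
    exact (Submodule.liftQ_apply η _ r).trans (LinearMap.toSpanSingleton_apply R M m r)
  refine ⟨μ, fun a ha => ?_, ?_⟩
  · ext x
    rw [coext_alg]
    obtain ⟨b, hb⟩ := Ideal.Quotient.mk_surjective (f (algebraMap S (S ⧸ Q) x))
    have : μ x = b • m := by rw [← hg, hb]; rfl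
    rw [this, smul_comm, hm a ha, smul_zero]; rfl
  · obtain ⟨b, hb⟩ := Ideal.Quotient.mk_surjective (f 1)
    refine ⟨b, fun h => hf ?_, ?_⟩
    · rw [← hb]; exact Ideal.Quotient.eq_zero_iff_mem.mpr h
    · rw [← hg, hb]; simp [μ]

theorem LTor_of_minimal {A X : Type*} [CommRing A] [IsNoetherianRing A] [AddCommGroup X]
    [Module A X] {I Q : Ideal A} (hQ : Q ∈ I.minimalPrimes) (μ : X) (h : ∀ a ∈ I, a • μ = 0) :
    LTor Q μ := by
  have hQp : Q.IsPrime := hQ.1.1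
  let J : Ideal A :=
    { carrier := {z | ∃ y, y ∉ Q ∧ y * z ∈ I}
      zero_mem' := ⟨1, one_notMem' hQp, by simp⟩
      add_mem' := by
        rintro a b ⟨s, hs, ha⟩ ⟨t, ht, hb⟩
        refine ⟨s * t, fun h => (hQp.mem_or_mem h).elim hs ht, ?_⟩
        rw [show s * t * (a + b) = t * (s * a) + s * (t * b) by ring]
        exact add_mem (I.mul_mem_left _ ha) (I.mul_mem_left _ hb)
      smul_mem' := by
        rintro c a ⟨s, hs, ha⟩
        exact ⟨s, hs, by rw [smul_eq_mul, mul_left_comm]; exact I.mul_mem_left _ ha⟩ }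
  have hIJ : I ≤ J := fun a ha => ⟨1, one_notMem' hQp, by simpa using ha⟩
  have hJr : Q ≤ J.radical := by
    intro x hx
    by_contra hxr
    -- a prime containing `J`, missing `x`
    rw [Ideal.radical_eq_sInf, Submodule.mem_sInf] at hxr
    push Not at hxr
    obtain ⟨P, ⟨hJP, hP⟩, hxP⟩ := hxr
    -- use multiplicative set of `y * x ^ n`
    have hdis : Disjoint (I : Set A) (Q.primeCompl ⊔ Submonoid.powers x : Submonoid A) := by
      rw [Set.disjoint_left]
      intro z hz hz'
      obtain ⟨y, hy, w, ⟨n, rfl⟩, rfl⟩ := Submonoid.mem_sup.mp hz'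
      have : x ^ n ∈ J := ⟨y, hy, hz⟩
      exact hxP (hP.mem_of_pow_mem n (hJP this))
    obtain ⟨P', hP', hIP', hd⟩ := Ideal.exists_le_prime_disjoint _ _ hdis
    rw [Set.disjoint_left] at hd
    have hle : P' ≤ Q := by
      intro z hz
      by_contra hzQ
      exact hd hz (Submonoid.mem_sup_left hzQ)
    have := hQ.2 ⟨hP', hIP'⟩ hle
    exact hd (this hx) (Submonoid.mem_sup_right (Submonoid.mem_powers x))
  obtain ⟨k, hk⟩ := Ideal.exists_pow_le_of_le_radical_of_fg hJr (IsNoetherian.noetherian Q)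
  refine ⟨k, fun a ha => ?_⟩
  obtain ⟨y, hy, hya⟩ := hk ha
  exact ⟨y, hy, by rw [← mul_smul]; exact h _ hya⟩

theorem local_mem (hp : p.Prime) [IsNoetherianRing S] [Module.Finite R S]
    (D : ℕ → Set (M →+ M)) (N : Submodule S (S →ₗ[R] M)) (j : ℕ)
    (H : ∀ Q : Ideal S, IsAssociatedPrime Q (S →ₗ[R] M) →
      ∀ χ ∈ CComp (pushShriek p R S M D) j, ∀ m, LTor Q m → ∃ s, s ∉ Q ∧ s • χ m ∈ N)
    (η : Ideal R) [hη : η.IsPrime] (μ : S →ₗ[R] M) (hμ : ∀ a ∈ η, algebraMap R S a • μ = 0)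
    (χ) (hχ : χ ∈ CComp (pushShriek p R S M D) j) :
    ∃ s, s ∉ η ∧ algebraMap R S s • χ μ ∈ N := by
  obtain ⟨q, hq, -, hsl⟩ := CComp_semi hp (push_semi _) _ _ hχ
  obtain ⟨q, rfl⟩ : ∃ q', q = q' + 1 := ⟨q - 1, by omega⟩
  have hann : ∀ s : S, s • μ = 0 → s • χ μ = 0 := by
    intro s hs
    rw [← hsl, pow_succ, mul_smul, hs, smul_zero, map_zero]
  by_contra! hcon
  let J : Ideal S := N.colon {χ μ}
  have hJ : ∀ x, x ∈ J ↔ x • χ μ ∈ N := fun x => Submodule.mem_colon_singleton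
  have hdis : Disjoint (J : Set S) (η.primeCompl.map (algebraMap R S) : Submonoid S) := by
    rw [Set.disjoint_left]
    rintro _ hz ⟨s, hs, rfl⟩
    exact hcon s hs ((hJ _).mp hz)
  obtain ⟨Q, hQ, hJQ, hd⟩ := Ideal.exists_le_prime_disjoint _ _ hdis
  rw [Set.disjoint_left] at hd
  have hηQ : η.map (algebraMap R S) ≤ Q := by
    rw [Ideal.map_le_iff_le_comap]
    intro a ha
    refine hJQ ((hJ _).mpr ?_)
    rw [hann _ (hμ a ha)]; exact N.zero_mem
  have hcomap : ∀ P : Ideal S, P ≤ Q → P.comap (algebraMap R S) ≤ η := by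
    intro P hP a ha
    by_contra h
    exact hd (hP ha) ⟨a, h, rfl⟩
  have hmin : Q ∈ (η.map (algebraMap R S)).minimalPrimes := by
    refine ⟨⟨hQ, hηQ⟩, fun P hP hPQ => ?_⟩
    haveI := hP.1
    by_contra hne
    have hlt : P < Q := lt_of_le_not_ge hPQ hne
    have := Ideal.IsIntegral.comap_lt_comap (R := R) hlt
    exact this.not_ge ((hcomap Q le_rfl).trans (Ideal.map_le_iff_le_comap.mp hP.2))
  have hIann : ∀ a ∈ η.map (algebraMap R S), a • μ = 0 := by
    intro a ha
    have : η.map (algebraMap R S) ≤ (⊥ : Submodule S (S →ₗ[R] M)).colon {μ} := by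
      rw [Ideal.map_le_iff_le_comap]
      intro b hb
      rw [Ideal.mem_comap, Submodule.mem_colon_singleton, Submodule.mem_bot]
      exact hμ b hb
    simpa using Submodule.mem_colon_singleton.mp (this ha)
  by_cases hs : ∃ s, s ∉ Q ∧ s • μ = 0
  · obtain ⟨s, hs, h0⟩ := hs
    exact hs (hJQ ((hJ _).mpr (by rw [hann s h0]; exact N.zero_mem)))
  · push Not at hs
    have hQa : IsAssociatedPrime Q (S →ₗ[R] M) := by
      rw [isAssociatedPrime_iff]
      refine ⟨hQ, Submodule.exists_eq_colon_of_mem_minimalPrimes (x := μ) ?_⟩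
      refine ⟨⟨hQ, fun a ha => ?_⟩, fun P hP hPQ => hmin.2 ⟨hP.1, le_trans ?_ hP.2⟩ hPQ⟩
      · by_contra h
        exact hs a h (by simpa using Submodule.mem_colon_singleton.mp ha)
      · intro a ha
        rw [Submodule.mem_colon_singleton, Submodule.mem_bot]
        exact hIann a ha
    obtain ⟨s, hs, h⟩ := H Q hQa χ hχ μ (LTor_of_minimal hmin μ hIann)
    exact hs (hJQ ((hJ _).mpr h))

/-- The trace image. -/
def trImage (N : Submodule S (S →ₗ[R] M)) : Submodule R M where
  carrier := (fun μ : S →ₗ[R] M => μ (1 : S)) '' (N : Set (S →ₗ[R] M))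
  zero_mem' := ⟨0, N.zero_mem, rfl⟩
  add_mem' := by
    rintro _ _ ⟨a, ha, rfl⟩ ⟨b, hb, rfl⟩
    exact ⟨a + b, N.add_mem ha hb, rfl⟩
  smul_mem' := by
    rintro r _ ⟨a, ha, rfl⟩
    exact ⟨_, N.smul_mem (algebraMap R S r) ha, coext_alg r a 1⟩

theorem LTor_uniform [IsNoetherianRing R] [Module.Finite R M] (η : Ideal R) [hη : η.IsPrime] :
    ∃ k : ℕ, ∀ m : M, LTor η m → ∀ a ∈ η ^ k, ∃ s, s ∉ η ∧ s • a • m = 0 := by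
  let T : ℕ →o Submodule R M :=
    { toFun := fun k =>
        { carrier := {m | ∀ a ∈ η ^ k, a • m ∈ locSub η hη (⊥ : Submodule R M)}
          zero_mem' := fun a _ => by rw [smul_zero]; exact zero_mem _
          add_mem' := fun {x y} hx hy a ha => by
            rw [smul_add]; exact add_mem (hx a ha) (hy a ha)
          smul_mem' := fun c x hx a ha => by
            rw [← mul_smul]; exact hx _ (Ideal.mul_mem_right _ _ ha) }
      monotone' := fun i j hij m hm a ha => hm a (Ideal.pow_le_pow_right hij ha) }
  obtain ⟨k, hk⟩ := monotone_stabilizes_iff_noetherian.mpr (inferInstance : IsNoetherian R M) T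
  refine ⟨k, fun m hm => ?_⟩
  obtain ⟨i, hi⟩ := hm
  have h1 : m ∈ T (max k i) := T.monotone (le_max_right k i) (fun a ha => by
    obtain ⟨s, hs, h⟩ := hi a ha
    exact ⟨s, hs, by simpa using h⟩ : m ∈ T i)
  rw [← hk _ (le_max_left k i)] at h1
  intro a ha
  obtain ⟨s, hs, h⟩ := h1 a ha
  exact ⟨s, hs, by simpa using h⟩

theorem trImage_mem (hp : p.Prime) [IsNoetherianRing S] [IsNoetherianRing R] [Module.Finite R S]
    [Module.Finite R M] [CharP S p] (hinj : Function.Injective (algebraMap R S))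
    (C : CartierStructure p R M) (N : Submodule S (S →ₗ[R] M))
    (hN : N ∈ testSet p S (S →ₗ[R] M) (pushShriek p R S M C.carrier)) :
    trImage N ∈ testSet p R M C.carrier := by
  refine ⟨?_, fun η hη => ?_⟩
  · rintro e he φ hφ _ ⟨μ, hμ, rfl⟩
    exact ⟨_, hN.1 e he _ (shriek_mem hp _ e φ (C.cartier_mem e he φ hφ) hφ) μ hμ,
      by simp [shriek]⟩
  rw [testCondAt_iff hp C.cartier_mem C.mul_mem]
  have hηp : η.IsPrime := hη.1
  -- uniform `j`
  obtain ⟨j, H⟩ : ∃ j, ∀ Q : Ideal S, IsAssociatedPrime Q (S →ₗ[R] M) →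
      ∀ χ ∈ CComp (pushShriek p R S M C.carrier) j, ∀ m, LTor Q m →
        ∃ s, s ∉ Q ∧ s • χ m ∈ N := by
    haveI : IsScalarTower R S (S →ₗ[R] M) := ⟨fun r s μ => by
      ext x
      rw [coext_apply, LinearMap.smul_apply, coext_apply, mul_smul_comm, map_smul]⟩
    haveI : Module.Finite S (S →ₗ[R] M) := Module.Finite.of_restrictScalars_finite R S _
    have hfin := associatedPrimes.finite S (S →ₗ[R] M)
    have h : ∀ Q : Ideal S, ∃ j, IsAssociatedPrime Q (S →ₗ[R] M) →
      ∀ χ ∈ CComp (pushShriek p R S M C.carrier) j, ∀ m, LTor Q m →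
        ∃ s, s ∉ Q ∧ s • χ m ∈ N := by
      intro Q
      by_cases hQ : IsAssociatedPrime Q (S →ₗ[R] M)
      · obtain ⟨j, -, hj⟩ := (testCondAt_iff hp (push_semi _) (push_mul _) N Q hQ.1).mp
          (hN.2 Q hQ)
        exact ⟨j, fun _ => hj⟩
      · exact ⟨0, fun h => absurd h hQ⟩
    choose f hf using h
    refine ⟨hfin.toFinset.sup f, fun Q hQ => ?_⟩
    exact cond_mono hp (push_semi _) hN.1
      (Finset.le_sup (f := f) (hfin.mem_toFinset.mpr hQ)) (hf Q hQ)
  obtain ⟨k, hk⟩ := LTor_uniform (M := M) η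
  refine ⟨j + (k + 1), by omega, fun χ hχ m hm => ?_⟩
  obtain ⟨φ, hφ, ψ, hψ, rfl⟩ := CComp_split _ _ _ hχ
  obtain ⟨q, hq, hkq, hsl⟩ := CComp_semi hp C.cartier_mem _ _ hψ
  obtain ⟨q', hq', -, hsl'⟩ := CComp_semi hp C.cartier_mem _ _ hφ
  rw [AddMonoidHom.comp_apply]
  -- `ψ m` is killed by `η` up to a multiplier
  obtain ⟨t, ht, h0⟩ : ∃ t, t ∉ η ∧ ∀ a ∈ η, t • a • ψ m = 0 := by
    obtain ⟨s, hs, h⟩ := common_mult (η := η) (⊥ : Submodule R M)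
        ((LinearMap.toSpanSingleton R _ (ψ m)).comp η.subtype)
        (fun x => by
          obtain ⟨s, h1, h2⟩ := hk m hm (x.1 ^ q)
            (Ideal.pow_le_pow_right (by omega) (Ideal.pow_mem_pow x.2 q))
          refine ⟨s, h1, ?_⟩
          obtain ⟨r, rfl⟩ : ∃ r, q = r + 1 := ⟨q - 1, by omega⟩
          have : s • x.1 • ψ m = 0 := by
            rw [← mul_smul, ← hsl, mul_pow, pow_succ, mul_assoc, mul_smul, mul_smul, h2,
              smul_zero, map_zero]
          simpa using this)
    exact ⟨s, hs, fun a ha => by simpa using h ⟨a, ha⟩⟩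
  obtain ⟨μ, hμ, r, hr, hμ1⟩ := exists_hom (S := S) hinj η (t • ψ m) (fun a ha => by
    rw [smul_comm, h0 a ha])
  obtain ⟨Φ, hΦ, hΦ1⟩ := lift_comp (S := S) hp C.carrier C.cartier_mem j φ hφ
  obtain ⟨q', rfl⟩ : ∃ r, q' = r + 1 := ⟨q' - 1, by omega⟩
  obtain ⟨s, hs, hmem⟩ := local_mem hp C.carrier N j H η
    (algebraMap R S ((r * t) ^ q') • μ) (fun a ha => by rw [smul_comm, hμ a ha, smul_zero]) Φ hΦ
  refine ⟨s * (r * t), ?_, ?_⟩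
  · intro h
    rcases hηp.mem_or_mem h with h | h
    · exact hs h
    · exact (hηp.mem_or_mem h).elim hr ht
  · refine ⟨_, hmem, ?_⟩
    show (algebraMap R S s • Φ (algebraMap R S ((r * t) ^ q') • μ)) 1 = _
    rw [coext_alg, hΦ1, coext_alg, hμ1, mul_smul, ← hsl' (r * t), pow_succ, mul_smul, mul_smul r]

end partA
/-- **Test modules under finite covers:** `Tr_M(τ(f^!M, f^*C)) = τ(M, C)`; in particular,
if `M` is `F`-regular (`τ(M,C) = M`) then the trace `Tr_M` is surjective. -/
theorem trace_image_testModule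
    (p : ℕ) (hp : p.Prime) (R : Type*) [CommRing R] [IsNoetherianRing R] [CharP R p]
    (hFf : letI := frobModule p hp R; Module.Finite R (FrobMod R))
    (S : Type*) [CommRing S] [Algebra R S] [Module.Finite R S]
    (hinj : Function.Injective (algebraMap R S))
    (M : Type*) [AddCommGroup M] [Module R M] [Module.Finite R M]
    (C : CartierStructure p R M)
    (τM : Submodule R M) (hτM : IsLeast (testSet p R M C.carrier) τM)
    (τS : Submodule S (S →ₗ[R] M))
    (hτS : IsLeast (testSet p S (S →ₗ[R] M) (pushShriek p R S M C.carrier)) τS) :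
    ((fun μ : S →ₗ[R] M => μ (1 : S)) '' (τS : Set (S →ₗ[R] M)) = (τM : Set M)) ∧
      (τM = ⊤ → Function.Surjective fun μ : S →ₗ[R] M => μ (1 : S)) := by
  haveI : IsNoetherianRing S := IsNoetherianRing.of_finite R S
  haveI : CharP S p := charP_of_injective_algebraMap hinj p
  have h1 : τM ≤ trImage τS := hτM.2 (trImage_mem hp hinj C τS hτS.1)
  have h2 : τS ≤ homInto S τM := hτS.2 (homInto_mem hp C τM hτM.1)
  have heq : (fun μ : S →ₗ[R] M => μ (1 : S)) '' (τS : Set (S →ₗ[R] M)) = (τM : Set M) := by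
    apply Set.Subset.antisymm
    · rintro _ ⟨μ, hμ, rfl⟩
      exact h2 hμ 1
    · exact h1
  refine ⟨heq, fun htop m => ?_⟩
  obtain ⟨μ, -, h⟩ := h1 (show m ∈ τM by rw [htop]; trivial)
  exact ⟨μ, h⟩
end
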